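/- (Theorem 20) Let 0 < θ, θ₁ < 1, 0 < q₁, r₀, r₁, r ≤ ∞, a, a₁, b₀, b₁ ∈ SV, ‖s^{-1/r₁} b₁(s)/a₁(s)‖_{r₁,(0,1)} < ∞, and ‖s^{-1/r₀} b₀(s)‖_{r₀,(1,∞)} < ∞. Put c₀(t) = ‖s^{-1/r₀} b₀(s)‖_{r₀,(t,∞)}, c₁(t) = a₁(t) ‖s^{-1/r₁} b₁(s)/a₁(s)‖_{r₁,(0,t)}, and ρ(t) = t^{θ₁} c₀(t)/c₁(t). Then (Ā_{0,r₀;b₀}, Ā^𝓡_{θ₁,r₁,b₁,q₁,a₁})_{θ,r;a} ≅ Ā_{η,r;a^#}, where η = θθ₁ and a^#(t) = c₀(t)^{1-θ} c₁(t)^θ a(ρ(t)). -/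

import Mathlib

open MeasureTheory Set ENNReal Filter

noncomputable section

/-- The `L_q` quasi-norm (with respect to Lebesgue measure) of an `ℝ≥0∞`-valued
function over a set of reals; for `q = ∞` it is the essential supremum. -/
def LqNorm (q : ℝ≥0∞) (s : Set ℝ) (g : ℝ → ℝ≥0∞) : ℝ≥0∞ :=
  if q = ∞ then essSup g (volume.restrict s)
  else (∫⁻ t in s, g t ^ q.toReal) ^ q⁻¹.toReal

/-- The weight `s ↦ s ^ (-1/r) * b s`, as an `ℝ≥0∞`-valued function
(`1/∞ = 0` by convention). -/
def svWgt (r : ℝ≥0∞) (b : ℝ → ℝ) : ℝ → ℝ≥0∞ :=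
  fun s => ENNReal.ofReal (s ^ (-(r⁻¹.toReal)) * b s)

/-- `f` and `g` are equivalent on `s`: each is bounded by a constant multiple
of the other there. -/
def EquivOn (s : Set ℝ) (f g : ℝ → ℝ) : Prop :=
  ∃ C : ℝ, 0 < C ∧ ∀ t ∈ s, C⁻¹ * g t ≤ f t ∧ f t ≤ C * g t

/-- A positive measurable function `b` on `(0,∞)` is slowly varying if for every
`ε > 0`, `t ^ ε * b t` is equivalent to a non-decreasing function and
`t ^ (-ε) * b t` is equivalent to a non-increasing function. -/
def SlowlyVarying (b : ℝ → ℝ) : Prop :=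
  AEMeasurable b (volume.restrict (Ioi 0)) ∧ (∀ t ∈ Ioi (0:ℝ), 0 < b t) ∧
    ∀ ε : ℝ, 0 < ε →
      (∃ g : ℝ → ℝ, MonotoneOn g (Ioi 0) ∧ EquivOn (Ioi 0) (fun t => t ^ ε * b t) g) ∧
      (∃ g : ℝ → ℝ, AntitoneOn g (Ioi 0) ∧ EquivOn (Ioi 0) (fun t => t ^ (-ε) * b t) g)

/-- A quasi-Banach space continuously embedded into the ambient (Hausdorff) space `E`,
recorded via its extended-real-valued quasi-norm; the space itself is the set of
vectors of finite quasi-norm. -/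
structure QuasiBanach (E : Type*) [AddCommGroup E] [Module ℝ E] where
  N : E → ℝ≥0∞
  zero : N 0 = 0
  definite : ∀ x, N x = 0 → x = 0
  smul : ∀ (c : ℝ) (x : E), N (c • x) = ENNReal.ofReal |c| * N x
  quasi : ∃ C : ℝ≥0∞, 1 ≤ C ∧ C ≠ ∞ ∧ ∀ x y, N (x + y) ≤ C * (N x + N y)
  complete : ∀ f : ℕ → E,
    (∀ ε : ℝ≥0∞, 0 < ε → ∃ M : ℕ, ∀ m ≥ M, ∀ n ≥ M, N (f m - f n) < ε) →
    (∀ n, N (f n) ≠ ∞) →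
    ∃ g : E, N g ≠ ∞ ∧ Tendsto (fun n => N (f n - g)) atTop (nhds 0)

variable {E : Type*} [AddCommGroup E] [Module ℝ E]

/-- The Peetre K-functional of the couple whose quasi-norms are `N₀`, `N₁`. -/
def Kf (N₀ N₁ : E → ℝ≥0∞) (t : ℝ) (f : E) : ℝ≥0∞ :=
  ⨅ g : E, N₀ g + ENNReal.ofReal t * N₁ (f - g)

/-- The quasi-norm of the real interpolation space `Ā_{θ,q;b}`. -/
def normK (N₀ N₁ : E → ℝ≥0∞) (θ : ℝ) (q : ℝ≥0∞) (b : ℝ → ℝ) (f : E) : ℝ≥0∞ :=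
  LqNorm q (Ioi 0) fun u =>
    ENNReal.ofReal (u ^ (-θ - q⁻¹.toReal) * b u) * Kf N₀ N₁ u f

/-- The quasi-norm of the limiting interpolation space `Ā^𝓛_{σ,r,b,q,a}`. -/
def normL (N₀ N₁ : E → ℝ≥0∞) (σ : ℝ) (r q : ℝ≥0∞) (b a : ℝ → ℝ) (f : E) : ℝ≥0∞ :=
  LqNorm r (Ioi 0) fun t =>
    ENNReal.ofReal (t ^ (-(r⁻¹.toReal)) * (b t / a t)) *
      LqNorm q (Ioo 0 t) fun u =>
        ENNReal.ofReal (u ^ (-σ - q⁻¹.toReal) * a u) * Kf N₀ N₁ u f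

/-- The quasi-norm of the limiting interpolation space `Ā^𝓡_{σ,r,b,q,a}`. -/
def normR (N₀ N₁ : E → ℝ≥0∞) (σ : ℝ) (r q : ℝ≥0∞) (b a : ℝ → ℝ) (f : E) : ℝ≥0∞ :=
  LqNorm r (Ioi 0) fun t =>
    ENNReal.ofReal (t ^ (-(r⁻¹.toReal)) * (b t / a t)) *
      LqNorm q (Ioi t) fun u =>
        ENNReal.ofReal (u ^ (-σ - q⁻¹.toReal) * a u) * Kf N₀ N₁ u f

/-- Two (extended-real-valued) quasi-norms define the same space with
equivalent quasi-norms. -/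
def EquivNorms (nX nY : E → ℝ≥0∞) : Prop :=
  ∃ C : ℝ≥0∞, 0 < C ∧ C ≠ ∞ ∧ ∀ f : E, C⁻¹ * nY f ≤ nX f ∧ nX f ≤ C * nY f

/-!
Write `X₀`, `X₁` for the two spaces of the inner couple and `k = K(·, f)`.  With respect to the Haar
measure `du/u` all weights have power growth and all functions have values of comparable size on a
dyadic block, so every quasi-norm below is a weighted sequence norm.  Since `ρ` grows between two
positive powers it may be substituted in the outer norm, and the claim becomes a comparison of
`t ↦ K(ρ(t), f; X₀, X₁) / c₀(t)` with `k`.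

The lower bound `c₀(t) k(t) ≲ K(ρ(t), f; X₀, X₁)` holds because `c₀(t) k(t) ≲ ‖f‖_{X₀}`, by
monotonicity of `k` on `(t,∞)`, and `c₀(t) k(t) ≲ ρ(t) ‖f‖_{X₁}`, by restriction of the norm to
`(0,t)`, where the inner norm sees `k(t)`.  The converse bound can fail pointwise.  It becomes true
when `k` is replaced by the least weighted majorant `M` of `k` of slow growth, which does not change
the outer norm: `M` controls `k` by a power `p > 0` of `u/t` on `(0,t)` and by a power `P < θ₁` on
`(t,∞)`, so that for a nearly optimal decomposition `f = g + (f - g)` at the scale `t` both endpoint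
norms are given by what happens near `t`.
-/

/-! ### Functions of power growth -/

/-- Two-sided power growth: up to a constant, `f` grows at least like `t ^ α` and at most like
`t ^ β`, i.e. its lower and upper Matuszewska indices lie in `[α, β]`. -/
def HasPowerGrowth (f : ℝ → ℝ) (α β : ℝ) : Prop :=
  (∀ t, 0 < t → 0 < f t) ∧ ∃ C : ℝ, 0 < C ∧ ∀ s t, 0 < s → s ≤ t →
    f t ≤ C * (t / s) ^ β * f s ∧ (t / s) ^ α * f s ≤ C * f t

/-- Growth slower than every power. Unlike `SlowlyVarying` it carries no measurability, so that it
is stable under all the operations below. -/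
def HasSubpowerGrowth (f : ℝ → ℝ) : Prop :=
  ∀ ε : ℝ, 0 < ε → HasPowerGrowth f (-ε) ε

/-- Points within a factor `L` of each other have values within a factor `C * L ^ m`. The constants
are explicit because the property is used uniformly over families of functions. -/
def HasModerateGrowth (C m : ℝ) (F : ℝ → ℝ≥0∞) : Prop :=
  ∀ u v L : ℝ, 0 < u → 0 < v → u ≤ L * v → v ≤ L * u → F u ≤ ENNReal.ofReal (C * L ^ m) * F v

namespace HasPowerGrowth

variable {f g : ℝ → ℝ} {α β α' β' : ℝ}

lemma pos (h : HasPowerGrowth f α β) {t : ℝ} (ht : 0 < t) : 0 < f t := h.1 t ht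

lemma mono (h : HasPowerGrowth f α β) (hα : α' ≤ α) (hβ : β ≤ β') : HasPowerGrowth f α' β' := by
  obtain ⟨hf, C, hC, h⟩ := h
  refine ⟨hf, C, hC, fun s t hs hst => ?_⟩
  have hts : 1 ≤ t / s := (one_le_div hs).2 hst
  have hfs := hf s hs
  obtain ⟨hu, hl⟩ := h s t hs hst
  exact ⟨hu.trans (by gcongr), le_trans (by gcongr) hl⟩

lemma congr (h : HasPowerGrowth f α β) (hfg : ∀ t, 0 < t → g t = f t) : HasPowerGrowth g α β := by
  obtain ⟨hf, C, hC, h⟩ := h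
  refine ⟨fun t ht => hfg t ht ▸ hf t ht, C, hC, fun s t hs hst => ?_⟩
  rw [hfg s hs, hfg t (hs.trans_le hst)]
  exact h s t hs hst

lemma mul (hf : HasPowerGrowth f α β) (hg : HasPowerGrowth g α' β') :
    HasPowerGrowth (fun t => f t * g t) (α + α') (β + β') := by
  obtain ⟨hf, C, hC, hfC⟩ := hf
  obtain ⟨hg, D, hD, hgD⟩ := hg
  refine ⟨fun t ht => mul_pos (hf t ht) (hg t ht), C * D, by positivity, fun s t hs hst => ?_⟩
  have ht : 0 < t := hs.trans_le hst
  have hts : 0 < t / s := by positivity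
  have := hf s hs
  have := hg s hs
  have := hf t ht
  have := hg t ht
  obtain ⟨hfu, hfl⟩ := hfC s t hs hst
  obtain ⟨hgu, hgl⟩ := hgD s t hs hst
  rw [Real.rpow_add hts, Real.rpow_add hts]
  constructor
  · calc f t * g t ≤ (C * (t / s) ^ β * f s) * (D * (t / s) ^ β' * g s) := by gcongr
      _ = _ := by ring
  · calc _ = ((t / s) ^ α * f s) * ((t / s) ^ α' * g s) := by ring
      _ ≤ (C * f t) * (D * g t) := by gcongr
      _ = _ := by ring

lemma inv (h : HasPowerGrowth f α β) : HasPowerGrowth (fun t => (f t)⁻¹) (-β) (-α) := by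
  obtain ⟨hf, C, hC, h⟩ := h
  refine ⟨fun t ht => inv_pos.2 (hf t ht), C, hC, fun s t hs hst => ?_⟩
  have ht : 0 < t := hs.trans_le hst
  have hts : 0 < t / s := by positivity
  have := hf s hs
  have := hf t ht
  obtain ⟨hu, hl⟩ := h s t hs hst
  rw [Real.rpow_neg hts.le, Real.rpow_neg hts.le]
  constructor
  · rw [show C * ((t / s) ^ α)⁻¹ * (f s)⁻¹ = C / ((t / s) ^ α * f s) by field_simp,
      le_div_iff₀ (by positivity), inv_mul_le_iff₀ (by positivity)]
    linarith
  · rw [← mul_inv, ← div_eq_mul_inv, le_div_iff₀ (by positivity), inv_mul_le_iff₀ (by positivity)]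
    linarith

lemma rpow (h : HasPowerGrowth f α β) {θ : ℝ} (hθ : 0 ≤ θ) :
    HasPowerGrowth (fun t => f t ^ θ) (α * θ) (β * θ) := by
  obtain ⟨hf, C, hC, h⟩ := h
  refine ⟨fun t ht => Real.rpow_pos_of_pos (hf t ht) _, C ^ θ, by positivity,
    fun s t hs hst => ?_⟩
  have ht : 0 < t := hs.trans_le hst
  have hts : 0 < t / s := by positivity
  have := hf s hs
  have := hf t ht
  obtain ⟨hu, hl⟩ := h s t hs hst
  rw [Real.rpow_mul hts.le, Real.rpow_mul hts.le, ← Real.mul_rpow (by positivity) (by positivity),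
    ← Real.mul_rpow (by positivity) (by positivity),
    ← Real.mul_rpow (by positivity) (by positivity),
    ← Real.mul_rpow (by positivity) (by positivity)]
  exact ⟨Real.rpow_le_rpow (by positivity) hu hθ, Real.rpow_le_rpow (by positivity) hl hθ⟩

lemma id_rpow (p : ℝ) : HasPowerGrowth (fun t => t ^ p) p p := by
  refine ⟨fun t ht => Real.rpow_pos_of_pos ht _, 1, one_pos, fun s t hs hst => ?_⟩
  have : (t / s) ^ p * s ^ p = t ^ p := by
    rw [Real.div_rpow (hs.trans_le hst).le hs.le, div_mul_cancel₀ _ (by positivity)]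
  simp only [one_mul, this, le_refl, and_self]

lemma le_mul_of_le_mul (h : HasPowerGrowth f α β) {m : ℝ} (hm : 0 ≤ m) (hα : -m ≤ α)
    (hβ : β ≤ m) :
    ∃ C > 0, ∀ u v L : ℝ, 0 < u → 0 < v → u ≤ L * v → v ≤ L * u → f u ≤ C * L ^ m * f v := by
  obtain ⟨hf, C, hC, h⟩ := h.mono hα hβ
  refine ⟨C, hC, fun u v L hu hv huL hvL => ?_⟩
  have := hf u hu
  have := hf v hv
  rcases le_total v u with hvu | huv
  · have : u / v ≤ L := (div_le_iff₀ hv).2 huL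
    exact (h v u hv hvu).1.trans (by gcongr)
  · have hl := (h u v hu huv).2
    have : v / u ≤ L := (div_le_iff₀ hu).2 hvL
    rw [Real.rpow_neg (by positivity), inv_mul_le_iff₀ (by positivity)] at hl
    calc f u ≤ (v / u) ^ m * (C * f v) := hl
      _ ≤ L ^ m * (C * f v) := by gcongr
      _ = C * L ^ m * f v := by ring

lemma exists_hasModerateGrowth (h : HasPowerGrowth f α β) {m : ℝ} (hm : 0 ≤ m) (hα : -m ≤ α)
    (hβ : β ≤ m) :
    ∃ C > 0, HasModerateGrowth C m (fun t => ENNReal.ofReal (f t)) := by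
  obtain ⟨C, hC, hfC⟩ := h.le_mul_of_le_mul hm hα hβ
  refine ⟨C, hC, fun u v L hu hv huL hvL => ?_⟩
  rw [← ENNReal.ofReal_mul' (h.pos hv).le]
  exact ENNReal.ofReal_le_ofReal (hfC u v L hu hv huL hvL)

lemma exists_exists_hasModerateGrowth (h : HasPowerGrowth f α β) :
    ∃ C > 0, ∃ m, HasModerateGrowth C m (fun t => ENNReal.ofReal (f t)) := by
  obtain ⟨C, hC, hf⟩ := h.exists_hasModerateGrowth (m := max |α| |β|) (by positivity)
    (by linarith [neg_abs_le α, le_max_left |α| |β|]) ((le_abs_self β).trans (le_max_right _ _))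
  exact ⟨C, hC, _, hf⟩

end HasPowerGrowth

namespace HasModerateGrowth

variable {C D m n : ℝ} {F G : ℝ → ℝ≥0∞}

lemma le_of_mem_Icc (h : HasModerateGrowth C m F) {u v L : ℝ} (hL : 1 ≤ L) (hu : 0 < u)
    (hv : v ∈ Icc u (L * u)) : F u ≤ ENNReal.ofReal (C * L ^ m) * F v ∧
      F v ≤ ENNReal.ofReal (C * L ^ m) * F u := by
  have hv0 : 0 < v := hu.trans_le hv.1
  have huv : u ≤ L * v := hv.1.trans (le_mul_of_one_le_left hv0.le hL)
  exact ⟨h u v L hu hv0 huv hv.2, h v u L hv0 hu hv.2 huv⟩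

lemma mul (hF : HasModerateGrowth C m F) (hG : HasModerateGrowth D n G) (hC : 0 ≤ C) :
    HasModerateGrowth (C * D) (m + n) (fun t => F t * G t) := by
  intro u v L hu hv huL hvL
  have hL : 0 < L := pos_of_mul_pos_left (hu.trans_le huL) hv.le
  calc F u * G u ≤ (ENNReal.ofReal (C * L ^ m) * F v) * (ENNReal.ofReal (D * L ^ n) * G v) :=
        mul_le_mul' (hF u v L hu hv huL hvL) (hG u v L hu hv huL hvL)
    _ = (ENNReal.ofReal (C * L ^ m) * ENNReal.ofReal (D * L ^ n)) * (F v * G v) := by ring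
    _ = ENNReal.ofReal (C * D * L ^ (m + n)) * (F v * G v) := by
        rw [← ENNReal.ofReal_mul (by positivity), Real.rpow_add hL]
        ring_nf

lemma toReal_hasSubpowerGrowth (hF : ∀ t, 0 < t → F t ≠ 0 ∧ F t ≠ ∞)
    (h : ∀ ε > 0, ∃ C, HasModerateGrowth C ε F) : HasSubpowerGrowth fun t => (F t).toReal := by
  intro ε hε
  obtain ⟨C, hFC⟩ := h ε hε
  refine ⟨fun t ht => ENNReal.toReal_pos (hF t ht).1 (hF t ht).2, max C 1, by positivity,
    fun s t hs hst => ?_⟩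
  have ht : 0 < t := hs.trans_le hst
  have hts : 1 ≤ t / s := (one_le_div hs).2 hst
  have key : ∀ u v, 0 < u → 0 < v → u ≤ t / s * v → v ≤ t / s * u →
      (F u).toReal ≤ max C 1 * (t / s) ^ ε * (F v).toReal := by
    intro u v hu hv huL hvL
    have hle := (hFC u v _ hu hv huL hvL).trans
      (mul_le_mul' (ENNReal.ofReal_le_ofReal (mul_le_mul_of_nonneg_right (le_max_left C 1)
        (by positivity))) le_rfl)
    have hle' := ENNReal.toReal_mono (ENNReal.mul_ne_top ENNReal.ofReal_ne_top (hF v hv).2) hle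
    rwa [ENNReal.toReal_mul, ENNReal.toReal_ofReal (by positivity)] at hle'
  have hst' : s ≤ t / s * t := hst.trans (le_mul_of_one_le_left ht.le hts)
  have hts' : t ≤ t / s * s := (div_mul_cancel₀ t hs.ne').ge
  refine ⟨key t s ht hs hts' hst', ?_⟩
  rw [Real.rpow_neg (by positivity), inv_mul_le_iff₀ (by positivity)]
  linarith [key s t hs ht hst' hts']

end HasModerateGrowth

lemma HasPowerGrowth.exists_hasModerateGrowth_comp {ρ : ℝ → ℝ} {α β : ℝ}
    (hρ : HasPowerGrowth ρ α β) (hα : 0 ≤ α) (hβ : 0 ≤ β) {m : ℝ} :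
    ∃ D > 0, ∀ C ≥ 0, ∀ F : ℝ → ℝ≥0∞, HasModerateGrowth C m F →
      HasModerateGrowth (C * D) (β * m) (fun t => F (ρ t)) := by
  obtain ⟨D, hD, hρD⟩ := hρ.le_mul_of_le_mul hβ (by linarith) le_rfl
  refine ⟨D ^ m, by positivity, fun C _ F hF u v L hu hv huL hvL => ?_⟩
  have hL : 0 < L := pos_of_mul_pos_left (hu.trans_le huL) hv.le
  refine (hF _ _ (D * L ^ β) (hρ.pos hu) (hρ.pos hv) (hρD u v L hu hv huL hvL)
    (hρD v u L hv hu hvL huL)).trans_eq ?_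
  rw [Real.mul_rpow hD.le (by positivity), ← Real.rpow_mul hL.le, ← mul_assoc]

namespace HasSubpowerGrowth

variable {f g : ℝ → ℝ}

lemma pos (h : HasSubpowerGrowth f) {t : ℝ} (ht : 0 < t) : 0 < f t := (h 1 one_pos).pos ht

lemma mul (hf : HasSubpowerGrowth f) (hg : HasSubpowerGrowth g) :
    HasSubpowerGrowth (fun t => f t * g t) := fun ε hε =>
  ((hf (ε / 2) (by positivity)).mul (hg (ε / 2) (by positivity))).mono (by linarith) (by linarith)

lemma inv (hf : HasSubpowerGrowth f) : HasSubpowerGrowth (fun t => (f t)⁻¹) := fun ε hε => by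
  simpa using (hf ε hε).inv

lemma div (hf : HasSubpowerGrowth f) (hg : HasSubpowerGrowth g) :
    HasSubpowerGrowth (fun t => f t / g t) := by
  simpa only [div_eq_mul_inv] using hf.mul hg.inv

lemma rpow (hf : HasSubpowerGrowth f) {θ : ℝ} (hθ : 0 < θ) :
    HasSubpowerGrowth (fun t => f t ^ θ) := fun ε hε =>
  ((hf (ε / θ) (by positivity)).rpow hθ.le).mono
    (by rw [neg_mul, div_mul_cancel₀ _ hθ.ne']) (by rw [div_mul_cancel₀ _ hθ.ne'])

lemma congr (hf : HasSubpowerGrowth f) (hfg : ∀ t, 0 < t → g t = f t) : HasSubpowerGrowth g :=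
  fun ε hε => (hf ε hε).congr hfg

lemma comp (hf : HasSubpowerGrowth f) {ρ : ℝ → ℝ} {α β : ℝ} (hρ : HasPowerGrowth ρ α β)
    (hα : 0 ≤ α) (hβ : 0 < β) : HasSubpowerGrowth (fun t => f (ρ t)) := by
  have hf' : ∀ ε > 0, ∃ C, HasModerateGrowth C ε (fun t => ENNReal.ofReal (f (ρ t))) := by
    intro ε hε
    have hεβ : 0 ≤ ε / β := by positivity
    obtain ⟨C, hC, hfC⟩ := (hf (ε / β) (by positivity)).exists_hasModerateGrowth hεβ le_rfl le_rfl
    obtain ⟨D, -, hD⟩ := hρ.exists_hasModerateGrowth_comp hα hβ.le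
    exact ⟨C * D, mul_div_cancel₀ ε hβ.ne' ▸ hD C hC.le _ hfC⟩
  refine (HasModerateGrowth.toReal_hasSubpowerGrowth (fun t ht => ?_) hf').congr fun t ht =>
    (ENNReal.toReal_ofReal (hf.pos (hρ.pos ht)).le).symm
  simpa using hf.pos (hρ.pos ht)

lemma rpow_mul (hf : HasSubpowerGrowth f) (p : ℝ) {α β : ℝ} (hα : α < p) (hβ : p < β) :
    HasPowerGrowth (fun t => t ^ p * f t) α β := by
  have hε : 0 < min (p - α) (β - p) := lt_min (sub_pos.2 hα) (sub_pos.2 hβ)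
  refine ((HasPowerGrowth.id_rpow p).mul (hf _ hε)).mono ?_ ?_
  · linarith [min_le_left (p - α) (β - p)]
  · linarith [min_le_right (p - α) (β - p)]

end HasSubpowerGrowth

lemma EquivOn.exists_le_of_monotoneOn {f g : ℝ → ℝ} {S : Set ℝ} (h : EquivOn S f g)
    (hg : MonotoneOn g S) : ∃ C > 0, ∀ s ∈ S, ∀ t ∈ S, s ≤ t → f s ≤ C * f t := by
  obtain ⟨C, hC, hfg⟩ := h
  refine ⟨C * C, by positivity, fun s hs t ht hst => ?_⟩
  calc f s ≤ C * g s := (hfg s hs).2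
    _ ≤ C * g t := by gcongr; exact hg hs ht hst
    _ ≤ C * (C * f t) := by gcongr; exact (inv_mul_le_iff₀ hC).1 (hfg t ht).1
    _ = C * C * f t := by ring

lemma EquivOn.exists_le_of_antitoneOn {f g : ℝ → ℝ} {S : Set ℝ} (h : EquivOn S f g)
    (hg : AntitoneOn g S) : ∃ C > 0, ∀ s ∈ S, ∀ t ∈ S, s ≤ t → f t ≤ C * f s := by
  obtain ⟨C, hC, hfg⟩ := h
  refine ⟨C * C, by positivity, fun s hs t ht hst => ?_⟩
  calc f t ≤ C * g t := (hfg t ht).2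
    _ ≤ C * g s := by gcongr; exact hg hs ht hst
    _ ≤ C * (C * f s) := by gcongr; exact (inv_mul_le_iff₀ hC).1 (hfg s hs).1
    _ = C * C * f s := by ring

lemma SlowlyVarying.hasSubpowerGrowth {b : ℝ → ℝ} (h : SlowlyVarying b) : HasSubpowerGrowth b := by
  intro ε hε
  obtain ⟨-, hb, h⟩ := h
  obtain ⟨⟨g, hg, hbg⟩, ⟨g', hg', hbg'⟩⟩ := h ε hε
  obtain ⟨C, hC, hinc⟩ := hbg.exists_le_of_monotoneOn hg
  obtain ⟨D, _, hdec⟩ := hbg'.exists_le_of_antitoneOn hg'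
  refine ⟨hb, max C D, by positivity, fun s t hs hst => ?_⟩
  have ht : 0 < t := hs.trans_le hst
  have := hb s hs
  have := hb t ht
  have := Real.rpow_pos_of_pos hs ε
  have htε := Real.rpow_pos_of_pos ht ε
  have hi : s ^ ε * b s ≤ C * (t ^ ε * b t) := hinc s hs t ht hst
  have hd : t ^ (-ε) * b t ≤ D * (s ^ (-ε) * b s) := hdec s hs t ht hst
  rw [Real.rpow_neg ht.le, Real.rpow_neg hs.le, inv_mul_le_iff₀ htε] at hd
  rw [Real.rpow_neg (by positivity), Real.div_rpow ht.le hs.le]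
  constructor
  · calc b t ≤ t ^ ε * (D * ((s ^ ε)⁻¹ * b s)) := hd
      _ ≤ t ^ ε * (max C D * ((s ^ ε)⁻¹ * b s)) := by gcongr; exact le_max_right C D
      _ = max C D * (t ^ ε / s ^ ε) * b s := by ring
  · calc (t ^ ε / s ^ ε)⁻¹ * b s = (s ^ ε * b s) / t ^ ε := by rw [inv_div]; ring
      _ ≤ C * (t ^ ε * b t) / t ^ ε := by gcongr
      _ = C * b t := by field_simp
      _ ≤ max C D * b t := by gcongr; exact le_max_left C D

/-! ### The norm of `L_q(du/u)` -/

/-- The Haar measure `du/u` of the multiplicative group `(0,∞)`, as a measure on `ℝ`. Transporting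
Lebesgue measure by `exp` makes dilations translations and dyadic blocks unit intervals. -/
def mulHaar : Measure ℝ := volume.map Real.exp

/-- The quasi-norm of `L_q(S, du/u)`. -/
def haarNorm (q : ℝ≥0∞) (S : Set ℝ) (F : ℝ → ℝ≥0∞) : ℝ≥0∞ := eLpNorm F q (mulHaar.restrict S)

lemma mulHaar_eq_withDensity :
    mulHaar = (volume.restrict (Ioi 0)).withDensity fun u => ENNReal.ofReal u⁻¹ := by
  ext s hs
  have hm : MeasurableSet (Real.exp ⁻¹' s) := Real.measurable_exp hs
  have h := lintegral_image_eq_lintegral_abs_deriv_mul MeasurableSet.univ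
    (fun x _ => (Real.hasDerivAt_exp x).hasDerivWithinAt) Real.exp_injective.injOn
    (s.indicator fun u => ENNReal.ofReal u⁻¹)
  rw [image_univ, Real.range_exp, setLIntegral_univ] at h
  rw [mulHaar, Measure.map_apply Real.measurable_exp hs, withDensity_apply _ hs,
    ← lintegral_indicator hs, h, ← lintegral_indicator_one hm]
  refine lintegral_congr fun x => ?_
  by_cases hx : Real.exp x ∈ s
  · rw [indicator_of_mem hx, indicator_of_mem (mem_preimage.2 hx), abs_of_pos (Real.exp_pos x),
      ← ENNReal.ofReal_mul (Real.exp_pos x).le, mul_inv_cancel₀ (Real.exp_ne_zero x),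
      ENNReal.ofReal_one, Pi.one_apply]
  · rw [indicator_of_notMem hx, indicator_of_notMem (by simpa using hx), mul_zero]

lemma mulHaar_restrict {S : Set ℝ} (hS : MeasurableSet S) (hS₀ : S ⊆ Ioi 0) :
    mulHaar.restrict S = (volume.restrict S).withDensity fun u => ENNReal.ofReal u⁻¹ := by
  rw [mulHaar_eq_withDensity, restrict_withDensity hS, Measure.restrict_restrict hS,
    inter_eq_self_of_subset_left hS₀]

lemma LqNorm_eq_haarNorm {q : ℝ≥0∞} (hq : 0 < q) {S : Set ℝ} (hS : MeasurableSet S)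
    (hS₀ : S ⊆ Ioi 0) {F H : ℝ → ℝ≥0∞}
    (h : ∀ u ∈ S, F u = ENNReal.ofReal (u ^ (-(q⁻¹.toReal))) * H u) :
    LqNorm q S F = haarNorm q S H := by
  have hmeas : Measurable fun u : ℝ => ENNReal.ofReal u⁻¹ := by fun_prop
  rw [haarNorm, mulHaar_restrict hS hS₀, LqNorm]
  split_ifs with hq'
  · have hne : ∀ᵐ u ∂volume.restrict S, ENNReal.ofReal u⁻¹ ≠ 0 := by
      filter_upwards [ae_restrict_mem hS] with u hu
      simpa using hS₀ hu
    have hFH : F =ᵐ[volume.restrict S] H := by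
      filter_upwards [ae_restrict_mem hS] with u hu
      simpa [hq'] using h u hu
    rw [hq', eLpNorm_exponent_top, eLpNormEssSup_eq_essSup_enorm, essSup_congr_ae hFH]
    simp only [enorm_eq_self]
    exact le_antisymm
      (essSup_mono_measure (withDensity_absolutelyContinuous' hmeas.aemeasurable hne))
      (essSup_mono_measure (withDensity_absolutelyContinuous _ _))
  · have hp : 0 < q.toReal := ENNReal.toReal_pos hq.ne' hq'
    rw [eLpNorm_eq_lintegral_rpow_enorm_toReal hq.ne' hq', ENNReal.toReal_inv, one_div,
      lintegral_withDensity_eq_lintegral_mul_non_measurable _ hmeas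
        (Eventually.of_forall fun _ => ENNReal.ofReal_lt_top)]
    congr 1
    refine setLIntegral_congr_fun hS fun u hu => ?_
    have hu₀ : 0 < u := hS₀ hu
    simp only [Pi.mul_apply, enorm_eq_self, h u hu]
    rw [ENNReal.mul_rpow_of_nonneg _ _ hp.le, ENNReal.ofReal_rpow_of_pos (by positivity),
      ← Real.rpow_mul hu₀.le, ENNReal.toReal_inv, neg_mul, inv_mul_cancel₀ hp.ne',
      Real.rpow_neg_one]

section haarNorm

variable {q : ℝ≥0∞} {S T : Set ℝ} {F G : ℝ → ℝ≥0∞} {c : ℝ≥0∞}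

lemma haarNorm_le_mul (hS : MeasurableSet S) (hc : c ≠ ∞) (h : ∀ u ∈ S, F u ≤ c * G u) :
    haarNorm q S F ≤ c * haarNorm q S G := by
  lift c to NNReal using hc
  exact eLpNorm_le_nnreal_smul_eLpNorm_of_ae_le_mul'
    ((ae_restrict_iff' hS).2 (Eventually.of_forall h)) q

lemma haarNorm_mono (hS : MeasurableSet S) (h : ∀ u ∈ S, F u ≤ G u) :
    haarNorm q S F ≤ haarNorm q S G := by
  simpa using haarNorm_le_mul (q := q) hS one_ne_top (by simpa using h)

lemma haarNorm_mono_set (h : S ⊆ T) : haarNorm q S F ≤ haarNorm q T F :=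
  eLpNorm_mono_measure F (Measure.restrict_mono h le_rfl)

lemma mul_haarNorm_le (hS : MeasurableSet S) :
    c * haarNorm q S F ≤ haarNorm q S (fun u => c * F u) := by
  refine ENNReal.mul_le_of_forall_lt fun d hd b hb => ?_
  rcases eq_or_ne d 0 with rfl | hd₀
  · simp
  have hdtop : d ≠ ∞ := hd.ne_top
  calc d * b ≤ d * haarNorm q S F := by gcongr
    _ ≤ d * (d⁻¹ * haarNorm q S (fun u => c * F u)) := by
        gcongr
        refine haarNorm_le_mul hS (ENNReal.inv_ne_top.2 hd₀) fun u _ => ?_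
        rw [← ENNReal.mul_le_iff_le_inv hd₀ hdtop]
        gcongr
    _ = haarNorm q S (fun u => c * F u) := by
        rw [← mul_assoc, ENNReal.mul_inv_cancel hd₀ hdtop, one_mul]

end haarNorm

lemma add_rpow_le_two_rpow_mul {p : ℝ} (hp : 0 ≤ p) (x y : ℝ≥0∞) :
    (x + y) ^ p ≤ 2 ^ p * (x ^ p + y ^ p) := by
  have : x + y ≤ 2 * max x y := by
    rw [two_mul]
    exact add_le_add (le_max_left x y) (le_max_right x y)
  calc (x + y) ^ p ≤ (2 * max x y) ^ p := by gcongr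
    _ = 2 ^ p * max (x ^ p) (y ^ p) := by
      rw [ENNReal.mul_rpow_of_nonneg _ _ hp, (ENNReal.monotone_rpow_of_nonneg hp).map_max]
    _ ≤ 2 ^ p * (x ^ p + y ^ p) := by gcongr; exact max_le_add_of_nonneg zero_le zero_le

lemma eLpNorm_add_measure_le {X : Type*} [MeasurableSpace X] {q : ℝ≥0∞} (hq : 0 < q)
    (F : X → ℝ≥0∞) (μ ν : Measure X) :
    eLpNorm F q (μ + ν) ≤ 2 ^ q⁻¹.toReal * (eLpNorm F q μ + eLpNorm F q ν) := by
  rcases eq_or_ne q ∞ with rfl | hq'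
  · simp only [eLpNorm_exponent_top, ENNReal.inv_top, ENNReal.toReal_zero, ENNReal.rpow_zero,
      one_mul]
    refine eLpNormEssSup_le_of_ae_enorm_bound (ae_add_measure_iff.2 ⟨?_, ?_⟩)
    · filter_upwards [enorm_ae_le_eLpNormEssSup F μ] with x hx using hx.trans le_self_add
    · filter_upwards [enorm_ae_le_eLpNormEssSup F ν] with x hx using hx.trans le_add_self
  · simp only [eLpNorm_eq_lintegral_rpow_enorm_toReal hq.ne' hq', one_div, ENNReal.toReal_inv,
      lintegral_add_measure]
    exact add_rpow_le_two_rpow_mul (by positivity) _ _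

lemma haarNorm_union_le {q : ℝ≥0∞} (hq : 0 < q) (S T : Set ℝ) (F : ℝ → ℝ≥0∞) :
    haarNorm q (S ∪ T) F ≤ 2 ^ q⁻¹.toReal * (haarNorm q S F + haarNorm q T F) :=
  (eLpNorm_mono_measure F (Measure.restrict_union_le S T)).trans (eLpNorm_add_measure_le hq F _ _)

lemma map_mul_left_mulHaar {l : ℝ} (hl : 0 < l) : mulHaar.map (fun u => l * u) = mulHaar := by
  have h : (fun u : ℝ => l * u) ∘ Real.exp = Real.exp ∘ fun x => Real.log l + x := by
    ext x
    simp only [Function.comp_apply, Real.exp_add, Real.exp_log hl]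
  rw [mulHaar, Measure.map_map (measurable_const_mul l) Real.measurable_exp, h,
    ← Measure.map_map Real.measurable_exp (measurable_const_add _), map_add_left_eq_self]

lemma haarNorm_eq_haarNorm_preimage_mul_left {l : ℝ} (hl : 0 < l) (q : ℝ≥0∞) (S : Set ℝ)
    (F : ℝ → ℝ≥0∞) :
    haarNorm q S F = haarNorm q ((fun u => l * u) ⁻¹' S) (fun u => F (l * u)) := by
  have hl' : MeasurableEmbedding fun u : ℝ => l * u :=
    (Homeomorph.mulLeft₀ l hl.ne').measurableEmbedding
  rw [haarNorm]
  nth_rw 1 [← map_mul_left_mulHaar hl]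
  rw [hl'.restrict_map, hl'.eLpNorm_map_measure]
  rfl

lemma haarNorm_Ioi_eq {t : ℝ} (ht : 0 < t) (q : ℝ≥0∞) (F : ℝ → ℝ≥0∞) :
    haarNorm q (Ioi t) F = haarNorm q (Ioi 1) (fun u => F (t * u)) := by
  rw [haarNorm_eq_haarNorm_preimage_mul_left ht, preimage_const_mul_Ioi₀ _ ht, div_self ht.ne']

lemma haarNorm_Ioo_zero_eq {t : ℝ} (ht : 0 < t) (q : ℝ≥0∞) (F : ℝ → ℝ≥0∞) :
    haarNorm q (Ioo 0 t) F = haarNorm q (Ioo 0 1) (fun u => F (t * u)) := by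
  rw [haarNorm_eq_haarNorm_preimage_mul_left ht, preimage_const_mul_Ioo₀ _ _ ht, div_self ht.ne',
    zero_div]

lemma haarNorm_one_Ioo_one_two {q : ℝ≥0∞} (hq : 0 < q) :
    haarNorm q (Ioo 1 2) (fun _ => 1) ≠ 0 ∧ haarNorm q (Ioo 1 2) (fun _ => 1) ≠ ∞ := by
  have hpre : Real.exp ⁻¹' Ioo 1 2 = Ioo 0 (Real.log 2) := by
    ext x
    rw [mem_preimage, mem_Ioo, mem_Ioo, Real.one_lt_exp_iff, Real.lt_log_iff_exp_lt two_pos]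
  have hμ : mulHaar (Ioo 1 2) = ENNReal.ofReal (Real.log 2) := by
    rw [mulHaar, Measure.map_apply Real.measurable_exp measurableSet_Ioo, hpre, Real.volume_Ioo,
      sub_zero]
  have hμ₀ : mulHaar (Ioo 1 2) ≠ 0 := by
    simpa [hμ] using Real.log_pos one_lt_two
  rw [haarNorm, eLpNorm_const _ hq.ne' (by rwa [Ne, Measure.restrict_eq_zero]), enorm_eq_self,
    one_mul, Measure.restrict_apply_univ]
  refine ⟨?_, ENNReal.rpow_ne_top_of_nonneg (by positivity) (hμ ▸ ENNReal.ofReal_ne_top)⟩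
  simp only [ne_eq, ENNReal.rpow_eq_zero_iff, hμ₀, false_and, false_or, not_and, not_lt]
  exact fun _ => by positivity

lemma haarNorm_rpow_ne_top {q : ℝ≥0∞} (hq : 0 < q) {S : Set ℝ} (hS : MeasurableSet S)
    (hS₀ : S ⊆ Ioi 0) {β : ℝ} (hle : ∀ u ∈ S, u ^ β ≤ 1)
    (hint : ∀ p > 0, IntegrableOn (fun u : ℝ => u ^ (β * p - 1)) S) :
    haarNorm q S (fun u => ENNReal.ofReal (u ^ β)) ≠ ∞ := by
  rcases eq_or_ne q ∞ with rfl | hq'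
  · rw [haarNorm, eLpNorm_exponent_top]
    refine ne_top_of_le_ne_top one_ne_top (eLpNormEssSup_le_of_ae_enorm_bound ?_)
    filter_upwards [ae_restrict_mem hS] with u hu
    exact ENNReal.ofReal_le_one.2 (hle u hu)
  · have hp : 0 < q.toReal := ENNReal.toReal_pos hq.ne' hq'
    rw [haarNorm, mulHaar_restrict hS hS₀, eLpNorm_eq_lintegral_rpow_enorm_toReal hq.ne' hq',
      lintegral_withDensity_eq_lintegral_mul_non_measurable _ (by fun_prop)
        (Eventually.of_forall fun _ => ENNReal.ofReal_lt_top)]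
    refine ENNReal.rpow_ne_top_of_nonneg (by positivity) ?_
    refine ne_top_of_le_ne_top (hint _ hp).lintegral_lt_top.ne
      (setLIntegral_mono' hS fun u hu => ?_)
    have hu₀ : 0 < u := hS₀ hu
    simp only [Pi.mul_apply, enorm_eq_self]
    rw [ENNReal.ofReal_rpow_of_pos (by positivity), ← ENNReal.ofReal_mul (by positivity),
      ← Real.rpow_mul hu₀.le, Real.rpow_sub_one hu₀.ne', div_eq_inv_mul]

lemma haarNorm_rpow_Ioi_ne_top {q : ℝ≥0∞} (hq : 0 < q) {β : ℝ} (hβ : β < 0) :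
    haarNorm q (Ioi 1) (fun u => ENNReal.ofReal (u ^ β)) ≠ ∞ :=
  haarNorm_rpow_ne_top hq measurableSet_Ioi (Ioi_subset_Ioi zero_le_one)
    (fun _ hu => Real.rpow_le_one_of_one_le_of_nonpos (le_of_lt hu) hβ.le)
    fun _ hp => integrableOn_Ioi_rpow_of_lt (by linarith [mul_neg_of_neg_of_pos hβ hp]) one_pos

lemma haarNorm_rpow_Ioo_ne_top {q : ℝ≥0∞} (hq : 0 < q) {β : ℝ} (hβ : 0 < β) :
    haarNorm q (Ioo 0 1) (fun u => ENNReal.ofReal (u ^ β)) ≠ ∞ :=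
  haarNorm_rpow_ne_top hq measurableSet_Ioo (fun _ hu => hu.1)
    (fun _ hu => Real.rpow_le_one hu.1.le hu.2.le hβ.le)
    fun _ hp => (intervalIntegral.integrableOn_Ioo_rpow_iff one_pos).2 (by linarith [mul_pos hβ hp])

lemma exists_le_mul_haarNorm {q : ℝ≥0∞} (hq : 0 < q) (C m : ℝ) :
    ∃ D : ℝ≥0∞, D ≠ ∞ ∧ ∀ F, HasModerateGrowth C m F → ∀ t > 0,
      F t ≤ D * haarNorm q (Ioo t (2 * t)) F := by
  obtain ⟨hI₀, hI⟩ := haarNorm_one_Ioo_one_two hq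
  refine ⟨(haarNorm q (Ioo 1 2) fun _ => 1)⁻¹ * ENNReal.ofReal (C * 2 ^ m),
    ENNReal.mul_ne_top (ENNReal.inv_ne_top.2 hI₀) ENNReal.ofReal_ne_top, fun F hF t ht => ?_⟩
  have hone : haarNorm q (Ioo 1 2) (fun _ => 1) = haarNorm q (Ioo t (2 * t)) (fun _ => 1) := by
    rw [haarNorm_eq_haarNorm_preimage_mul_left ht q (Ioo t (2 * t)),
      preimage_const_mul_Ioo₀ _ _ ht, div_self ht.ne', mul_div_cancel_right₀ _ ht.ne']
  rw [mul_assoc, ← ENNReal.mul_le_iff_le_inv hI₀ hI, hone, mul_comm]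
  refine (mul_haarNorm_le measurableSet_Ioo).trans
    (haarNorm_le_mul measurableSet_Ioo ENNReal.ofReal_ne_top fun u hu => ?_)
  rw [mul_one]
  exact (hF.le_of_mem_Icc one_le_two ht ⟨hu.1.le, hu.2.le⟩).1

namespace HasPowerGrowth

variable {q : ℝ≥0∞} {v : ℝ → ℝ} {α β p : ℝ}

lemma exists_haarNorm_Ioo_le (hv : HasPowerGrowth v α β) (hq : 0 < q) (hp : 0 < α + p) :
    ∃ D : ℝ≥0∞, D ≠ ∞ ∧ ∀ (t : ℝ) (B : ℝ≥0∞) (k : ℝ → ℝ≥0∞), 0 < t → B ≠ ∞ →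
      (∀ u, 0 < u → u ≤ t → k u ≤ B * ENNReal.ofReal ((u / t) ^ p)) →
        haarNorm q (Ioo 0 t) (fun u => ENNReal.ofReal (v u) * k u) ≤
          D * B * ENNReal.ofReal (v t) := by
  obtain ⟨hv₀, C, hC, hvC⟩ := hv
  refine ⟨ENNReal.ofReal C * haarNorm q (Ioo 0 1) fun u => ENNReal.ofReal (u ^ (α + p)),
    ENNReal.mul_ne_top ENNReal.ofReal_ne_top (haarNorm_rpow_Ioo_ne_top hq hp),
    fun t B k ht hB hk => ?_⟩
  rw [haarNorm_Ioo_zero_eq ht, mul_assoc, mul_right_comm]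
  refine haarNorm_le_mul measurableSet_Ioo (by finiteness) fun u ⟨hu, hu1⟩ => ?_
  have htu : t * u ≤ t := mul_le_of_le_one_right ht.le hu1.le
  have hvu : v (t * u) ≤ C * v t * u ^ α := by
    have h := (hvC (t * u) t (by positivity) htu).2
    rw [div_mul_cancel_left₀ ht.ne', Real.inv_rpow hu.le, inv_mul_le_iff₀ (by positivity)] at h
    linarith
  have hku : k (t * u) ≤ B * ENNReal.ofReal (u ^ p) := by
    simpa only [mul_div_cancel_left₀ u ht.ne'] using hk (t * u) (by positivity) htu
  calc ENNReal.ofReal (v (t * u)) * k (t * u)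
      ≤ ENNReal.ofReal (C * v t * u ^ α) * (B * ENNReal.ofReal (u ^ p)) := by gcongr
    _ = ENNReal.ofReal C * (B * ENNReal.ofReal (v t)) * ENNReal.ofReal (u ^ (α + p)) := by
      have := hv₀ t ht
      rw [Real.rpow_add hu, ENNReal.ofReal_mul (by positivity), ENNReal.ofReal_mul hC.le,
        ENNReal.ofReal_mul (by positivity)]
      ring

lemma exists_haarNorm_Ioi_le (hv : HasPowerGrowth v α β) (hq : 0 < q) (hp : β + p < 0) :
    ∃ D : ℝ≥0∞, D ≠ ∞ ∧ ∀ (t : ℝ) (B : ℝ≥0∞) (k : ℝ → ℝ≥0∞), 0 < t → B ≠ ∞ →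
      (∀ u, t ≤ u → k u ≤ B * ENNReal.ofReal ((u / t) ^ p)) →
        haarNorm q (Ioi t) (fun u => ENNReal.ofReal (v u) * k u) ≤
          D * B * ENNReal.ofReal (v t) := by
  obtain ⟨hv₀, C, hC, hvC⟩ := hv
  refine ⟨ENNReal.ofReal C * haarNorm q (Ioi 1) fun u => ENNReal.ofReal (u ^ (β + p)),
    ENNReal.mul_ne_top ENNReal.ofReal_ne_top (haarNorm_rpow_Ioi_ne_top hq hp),
    fun t B k ht hB hk => ?_⟩
  rw [haarNorm_Ioi_eq ht, mul_assoc, mul_right_comm]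
  refine haarNorm_le_mul measurableSet_Ioi (by finiteness) fun u (hu1 : 1 < u) => ?_
  have hu : 0 < u := one_pos.trans hu1
  have htu : t ≤ t * u := le_mul_of_one_le_right ht.le hu1.le
  have hvu : v (t * u) ≤ C * v t * u ^ β := by
    have h := (hvC t (t * u) ht htu).1
    rw [mul_div_cancel_left₀ u ht.ne'] at h
    linarith
  have hku : k (t * u) ≤ B * ENNReal.ofReal (u ^ p) := by
    simpa only [mul_div_cancel_left₀ u ht.ne'] using hk (t * u) htu
  calc ENNReal.ofReal (v (t * u)) * k (t * u)
      ≤ ENNReal.ofReal (C * v t * u ^ β) * (B * ENNReal.ofReal (u ^ p)) := by gcongr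
    _ = ENNReal.ofReal C * (B * ENNReal.ofReal (v t)) * ENNReal.ofReal (u ^ (β + p)) := by
      have := hv₀ t ht
      rw [Real.rpow_add hu, ENNReal.ofReal_mul (by positivity), ENNReal.ofReal_mul hC.le,
        ENNReal.ofReal_mul (by positivity)]
      ring

end HasPowerGrowth

/-! ### Tails and heads of functions of subpower growth -/

/-- The norm over the dilate `t • S` of `S`, as a function of `t`. It is the common form of
`tailNorm` (`S = (1,∞)`) and `headNorm` (`S = (0,1)`). -/
def dilatedNorm (r : ℝ≥0∞) (S : Set ℝ) (b : ℝ → ℝ) (t : ℝ) : ℝ≥0∞ :=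
  haarNorm r S fun u => ENNReal.ofReal (b (t * u))

/-- The paper's `‖s ^ (-1/r) b(s)‖_{r,(t,∞)}`. -/
def tailNorm (r : ℝ≥0∞) (b : ℝ → ℝ) (t : ℝ) : ℝ≥0∞ :=
  haarNorm r (Ioi t) fun u => ENNReal.ofReal (b u)

/-- The paper's `‖s ^ (-1/r) b(s)‖_{r,(0,t)}`. -/
def headNorm (r : ℝ≥0∞) (b : ℝ → ℝ) (t : ℝ) : ℝ≥0∞ :=
  haarNorm r (Ioo 0 t) fun u => ENNReal.ofReal (b u)

lemma tailNorm_eq_dilatedNorm {t : ℝ} (ht : 0 < t) (r : ℝ≥0∞) (b : ℝ → ℝ) :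
    tailNorm r b t = dilatedNorm r (Ioi 1) b t :=
  haarNorm_Ioi_eq ht r _

lemma headNorm_eq_dilatedNorm {t : ℝ} (ht : 0 < t) (r : ℝ≥0∞) (b : ℝ → ℝ) :
    headNorm r b t = dilatedNorm r (Ioo 0 1) b t :=
  haarNorm_Ioo_zero_eq ht r _

namespace HasSubpowerGrowth

variable {b : ℝ → ℝ} {r : ℝ≥0∞} {S : Set ℝ}

lemma exists_hasModerateGrowth_dilatedNorm (hb : HasSubpowerGrowth b) (hS : MeasurableSet S)
    (hS₀ : S ⊆ Ioi 0) {ε : ℝ} (hε : 0 < ε) :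
    ∃ C, HasModerateGrowth C ε (dilatedNorm r S b) := by
  obtain ⟨C, -, hbC⟩ := (hb ε hε).exists_hasModerateGrowth hε.le le_rfl le_rfl
  refine ⟨C, fun t t' L ht ht' htL ht'L =>
    haarNorm_le_mul hS ENNReal.ofReal_ne_top fun u hu => ?_⟩
  have hu₀ : 0 < u := hS₀ hu
  exact hbC _ _ L (by positivity) (by positivity)
    (by rw [← mul_assoc]; gcongr) (by rw [← mul_assoc]; gcongr)

lemma dilatedNorm_ne_top (hb : HasSubpowerGrowth b) (hS : MeasurableSet S) (hS₀ : S ⊆ Ioi 0)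
    (hfin : dilatedNorm r S b 1 ≠ ∞) {t : ℝ} (ht : 0 < t) : dilatedNorm r S b t ≠ ∞ := by
  obtain ⟨C, hC⟩ := hb.exists_hasModerateGrowth_dilatedNorm (r := r) hS hS₀ one_pos
  refine ne_top_of_le_ne_top (ENNReal.mul_ne_top ENNReal.ofReal_ne_top hfin)
    (hC t 1 (max t t⁻¹) ht one_pos (by simp) ?_)
  calc (1 : ℝ) = t⁻¹ * t := (inv_mul_cancel₀ ht.ne').symm
    _ ≤ max t t⁻¹ * t := by gcongr; exact le_max_right t t⁻¹

lemma exists_le_mul_dilatedNorm (hb : HasSubpowerGrowth b) (hr : 0 < r) {s : ℝ} (hs : 0 < s)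
    (hsS : Ioo s (2 * s) ⊆ S) :
    ∃ C : ℝ≥0∞, C ≠ ∞ ∧ ∀ t > 0, ENNReal.ofReal (b t) ≤ C * dilatedNorm r S b t := by
  obtain ⟨C, -, hbC⟩ := (hb 1 one_pos).exists_hasModerateGrowth zero_le_one le_rfl le_rfl
  obtain ⟨D, hD, hDb⟩ := exists_le_mul_haarNorm hr C 1
  refine ⟨ENNReal.ofReal (C * max s s⁻¹ ^ (1 : ℝ)) * D, by finiteness, fun t ht => ?_⟩
  have hst : t ≤ max s s⁻¹ * (t * s) := by
    calc t = s⁻¹ * (t * s) := by field_simp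
      _ ≤ max s s⁻¹ * (t * s) := by gcongr; exact le_max_right s s⁻¹
  have hts : t * s ≤ max s s⁻¹ * t := by
    rw [mul_comm t s]
    gcongr
    exact le_max_left s s⁻¹
  calc ENNReal.ofReal (b t)
      ≤ ENNReal.ofReal (C * max s s⁻¹ ^ (1 : ℝ)) * ENNReal.ofReal (b (t * s)) :=
        hbC t (t * s) _ ht (by positivity) hst hts
    _ ≤ ENNReal.ofReal (C * max s s⁻¹ ^ (1 : ℝ)) *
        (D * haarNorm r (Ioo (t * s) (2 * (t * s))) fun u => ENNReal.ofReal (b u)) := by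
        gcongr
        exact hDb _ hbC _ (by positivity)
    _ ≤ ENNReal.ofReal (C * max s s⁻¹ ^ (1 : ℝ)) * (D * dilatedNorm r S b t) := by
        gcongr
        rw [haarNorm_eq_haarNorm_preimage_mul_left ht, preimage_const_mul_Ioo₀ _ _ ht,
          mul_left_comm, mul_div_cancel_left₀ _ ht.ne', mul_div_cancel_left₀ _ ht.ne']
        exact haarNorm_mono_set hsS
    _ = _ := (mul_assoc _ _ _).symm

lemma dilatedNorm_ne_zero (hb : HasSubpowerGrowth b) (hr : 0 < r) {s : ℝ} (hs : 0 < s)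
    (hsS : Ioo s (2 * s) ⊆ S) {t : ℝ} (ht : 0 < t) : dilatedNorm r S b t ≠ 0 := by
  obtain ⟨C, -, hC⟩ := hb.exists_le_mul_dilatedNorm hr hs hsS
  intro h
  have hbt := hC t ht
  rw [h, mul_zero, nonpos_iff_eq_zero, ENNReal.ofReal_eq_zero] at hbt
  exact (hb.pos ht).not_ge hbt

lemma toReal_dilatedNorm (hb : HasSubpowerGrowth b) (hr : 0 < r) (hS : MeasurableSet S)
    (hS₀ : S ⊆ Ioi 0) {s : ℝ} (hs : 0 < s) (hsS : Ioo s (2 * s) ⊆ S)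
    (hfin : dilatedNorm r S b 1 ≠ ∞) :
    HasSubpowerGrowth fun t => (dilatedNorm r S b t).toReal :=
  HasModerateGrowth.toReal_hasSubpowerGrowth
    (fun _ ht => ⟨hb.dilatedNorm_ne_zero hr hs hsS ht, hb.dilatedNorm_ne_top hS hS₀ hfin ht⟩)
    fun _ hε => hb.exists_hasModerateGrowth_dilatedNorm hS hS₀ hε

private lemma Ioo_half_subset : Ioo (2⁻¹ : ℝ) (2 * 2⁻¹) ⊆ Ioo 0 1 := by
  rw [mul_inv_cancel₀ two_ne_zero]
  exact Ioo_subset_Ioo_left (by norm_num)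

section tailNorm

variable {t : ℝ}

lemma tailNorm_ne_top (hb : HasSubpowerGrowth b) (hfin : tailNorm r b 1 ≠ ∞) (ht : 0 < t) :
    tailNorm r b t ≠ ∞ := by
  rw [tailNorm_eq_dilatedNorm one_pos] at hfin
  rw [tailNorm_eq_dilatedNorm ht]
  exact hb.dilatedNorm_ne_top measurableSet_Ioi (Ioi_subset_Ioi zero_le_one) hfin ht

lemma toReal_tailNorm (hb : HasSubpowerGrowth b) (hr : 0 < r) (hfin : tailNorm r b 1 ≠ ∞) :
    HasSubpowerGrowth fun t => (tailNorm r b t).toReal := by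
  rw [tailNorm_eq_dilatedNorm one_pos] at hfin
  exact (hb.toReal_dilatedNorm hr measurableSet_Ioi (Ioi_subset_Ioi zero_le_one) one_pos
    Ioo_subset_Ioi_self hfin).congr fun t ht => by rw [tailNorm_eq_dilatedNorm ht]

lemma exists_le_mul_tailNorm (hb : HasSubpowerGrowth b) (hr : 0 < r) :
    ∃ C : ℝ≥0∞, C ≠ ∞ ∧ ∀ t > 0, ENNReal.ofReal (b t) ≤ C * tailNorm r b t := by
  obtain ⟨C, hC, h⟩ := hb.exists_le_mul_dilatedNorm hr one_pos Ioo_subset_Ioi_self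
  exact ⟨C, hC, fun t ht => tailNorm_eq_dilatedNorm ht r b ▸ h t ht⟩

end tailNorm

section headNorm

variable {t : ℝ}

lemma headNorm_ne_top (hb : HasSubpowerGrowth b) (hfin : headNorm r b 1 ≠ ∞) (ht : 0 < t) :
    headNorm r b t ≠ ∞ := by
  rw [headNorm_eq_dilatedNorm one_pos] at hfin
  rw [headNorm_eq_dilatedNorm ht]
  exact hb.dilatedNorm_ne_top measurableSet_Ioo (fun _ hu => hu.1) hfin ht

lemma toReal_headNorm (hb : HasSubpowerGrowth b) (hr : 0 < r) (hfin : headNorm r b 1 ≠ ∞) :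
    HasSubpowerGrowth fun t => (headNorm r b t).toReal := by
  rw [headNorm_eq_dilatedNorm one_pos] at hfin
  exact (hb.toReal_dilatedNorm hr measurableSet_Ioo (fun _ hu => hu.1) (inv_pos.2 two_pos)
    Ioo_half_subset hfin).congr fun t ht => by rw [headNorm_eq_dilatedNorm ht]

lemma exists_le_mul_headNorm (hb : HasSubpowerGrowth b) (hr : 0 < r) :
    ∃ C : ℝ≥0∞, C ≠ ∞ ∧ ∀ t > 0, ENNReal.ofReal (b t) ≤ C * headNorm r b t := by
  obtain ⟨C, hC, h⟩ := hb.exists_le_mul_dilatedNorm hr (inv_pos.2 two_pos) Ioo_half_subset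
  exact ⟨C, hC, fun t ht => headNorm_eq_dilatedNorm ht r b ▸ h t ht⟩

end headNorm

end HasSubpowerGrowth

/-! ### Dyadic discretization -/

lemma measurable_intLog_two : Measurable (Int.log 2 : ℝ → ℤ) := by
  have h : (Int.log 2 : ℝ → ℤ) = fun t => ⌊Real.log (max t 0) / Real.log 2⌋ := by
    ext t
    have hfloor := Real.floor_logb_natCast (b := 2) (le_max_right t 0)
    rw [Nat.cast_ofNat] at hfloor
    rw [Real.log_div_log, hfloor]
    rcases le_total t 0 with ht | ht
    · rw [max_eq_right ht, Int.log_of_right_le_zero _ ht, Int.log_zero_right]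
    · rw [max_eq_left ht]
  rw [h]
  fun_prop

lemma intLog_two_eq_iff {t : ℝ} (ht : 0 < t) {j : ℤ} :
    Int.log 2 t = j ↔ t ∈ Ico ((2 : ℝ) ^ j) (2 ^ (j + 1)) := by
  have h₁ := Int.zpow_le_iff_le_log (b := 2) one_lt_two (x := j) ht
  have h₂ := Int.lt_zpow_iff_log_lt (b := 2) one_lt_two (x := j + 1) ht
  push_cast at h₁ h₂
  rw [mem_Ico, h₁, h₂]
  omega

lemma mem_Icc_zpow_intLog {t : ℝ} (ht : 0 < t) :
    t ∈ Icc ((2 : ℝ) ^ Int.log 2 t) (2 * 2 ^ Int.log 2 t) := by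
  obtain ⟨h₁, h₂⟩ := (intLog_two_eq_iff ht).1 rfl
  rw [zpow_add_one₀ two_ne_zero, mul_comm] at h₂
  exact ⟨h₁, h₂.le⟩

lemma map_intLog_two_mulHaar :
    (mulHaar.restrict (Ioi 0)).map (Int.log 2) = ENNReal.ofReal (Real.log 2) • Measure.count := by
  refine Measure.ext_of_singleton fun j => ?_
  have hpre : Real.exp ⁻¹' (Int.log 2 ⁻¹' {j} ∩ Ioi 0) =
      Ico (j * Real.log 2) ((j + 1) * Real.log 2) := by
    ext x
    have hexp : ∀ i : ℤ, (2 : ℝ) ^ i = Real.exp (i * Real.log 2) := fun i => by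
      rw [mul_comm, ← Real.rpow_def_of_pos two_pos, Real.rpow_intCast]
    simp only [mem_preimage, mem_inter_iff, mem_singleton_iff, mem_Ioi, Real.exp_pos, and_true,
      intLog_two_eq_iff (Real.exp_pos x), hexp, mem_Ico, Real.exp_le_exp, Real.exp_lt_exp,
      Int.cast_add, Int.cast_one]
  have hj := measurable_intLog_two (measurableSet_singleton j)
  rw [Measure.map_apply measurable_intLog_two (measurableSet_singleton j),
    Measure.restrict_apply hj, mulHaar, Measure.map_apply Real.measurable_exp
      (hj.inter measurableSet_Ioi), hpre, Real.volume_Ico]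
  simp [add_mul]

lemma haarNorm_comp_intLog_two (q : ℝ≥0∞) (x : ℤ → ℝ≥0∞) :
    haarNorm q (Ioi 0) (fun t => x (Int.log 2 t)) =
      ENNReal.ofReal (Real.log 2) ^ (1 / q).toReal * eLpNorm x q Measure.count := by
  have hlog : ENNReal.ofReal (Real.log 2) ≠ 0 := by simpa using Real.log_pos one_lt_two
  rw [← smul_eq_mul, ← eLpNorm_smul_measure_of_ne_zero hlog, ← map_intLog_two_mulHaar,
    eLpNorm_map_measure (measurable_of_countable x).aestronglyMeasurable
      measurable_intLog_two.aemeasurable]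
  rfl

lemma eLpNorm_le_mul_of_forall_le {X : Type*} [MeasurableSpace X] {μ : Measure X} {q c : ℝ≥0∞}
    {x y : X → ℝ≥0∞} (hc : c ≠ ∞) (h : ∀ j, x j ≤ c * y j) :
    eLpNorm x q μ ≤ c * eLpNorm y q μ := by
  lift c to NNReal using hc
  exact eLpNorm_le_nnreal_smul_eLpNorm_of_ae_le_mul' (Eventually.of_forall h) q

lemma HasModerateGrowth.exists_haarNorm_equiv_eLpNorm (q : ℝ≥0∞) (C m : ℝ) :
    ∃ D : ℝ≥0∞, D ≠ ∞ ∧ ∀ F : ℝ → ℝ≥0∞, HasModerateGrowth C m F →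
      haarNorm q (Ioi 0) F ≤ D * eLpNorm (fun j : ℤ => F (2 ^ j)) q Measure.count ∧
      eLpNorm (fun j : ℤ => F (2 ^ j)) q Measure.count ≤ D * haarNorm q (Ioi 0) F := by
  set l : ℝ≥0∞ := ENNReal.ofReal (Real.log 2) ^ (1 / q).toReal
  have hlog : 0 < ENNReal.ofReal (Real.log 2) := by simpa using Real.log_pos one_lt_two
  have hl₀ : l ≠ 0 := (ENNReal.rpow_pos hlog ENNReal.ofReal_ne_top).ne'
  have hl : l ≠ ∞ := by finiteness
  set K : ℝ≥0∞ := ENNReal.ofReal (C * 2 ^ m)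
  have hK : K ≠ ∞ := ENNReal.ofReal_ne_top
  refine ⟨K * max l l⁻¹, ENNReal.mul_ne_top hK (max_ne_top hl (ENNReal.inv_ne_top.2 hl₀)),
    fun F hF => ⟨?_, ?_⟩⟩
  · calc haarNorm q (Ioi 0) F ≤ K * haarNorm q (Ioi 0) (fun t => F (2 ^ Int.log 2 t)) :=
          haarNorm_le_mul measurableSet_Ioi hK fun t ht =>
            (hF.le_of_mem_Icc one_le_two (by positivity) (mem_Icc_zpow_intLog ht)).2
      _ = K * (l * eLpNorm (fun j : ℤ => F (2 ^ j)) q Measure.count) := by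
          rw [haarNorm_comp_intLog_two q fun j => F (2 ^ j)]
      _ ≤ _ := by rw [← mul_assoc]; gcongr; exact le_max_left l l⁻¹
  · calc eLpNorm (fun j : ℤ => F (2 ^ j)) q Measure.count
        = l⁻¹ * haarNorm q (Ioi 0) (fun t => F (2 ^ Int.log 2 t)) := by
          rw [haarNorm_comp_intLog_two q fun j => F (2 ^ j), ← mul_assoc,
            ENNReal.inv_mul_cancel hl₀ hl, one_mul]
      _ ≤ l⁻¹ * (K * haarNorm q (Ioi 0) F) := by
          gcongr
          exact haarNorm_le_mul measurableSet_Ioi hK fun t ht =>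
            (hF.le_of_mem_Icc one_le_two (by positivity) (mem_Icc_zpow_intLog ht)).1
      _ ≤ _ := by rw [mul_left_comm, ← mul_assoc]; gcongr; exact le_max_right l l⁻¹

/-! ### Change of variables -/

lemma map_count_le_of_fibers {κ : ℤ → ℤ} {N : ℕ} (hκ : ∀ j j', κ j = κ j' → j ≤ j' + N) :
    Measure.count.map κ ≤ ((2 * N + 1 : ℕ) : ℝ≥0∞) • Measure.count := by
  have hfiber : ∀ i, Measure.count (κ ⁻¹' {i}) ≤ ((2 * N + 1 : ℕ) : ℝ≥0∞) := by
    intro i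
    rcases (κ ⁻¹' {i}).eq_empty_or_nonempty with h | ⟨j, hj⟩
    · simp [h]
    have hsub : κ ⁻¹' {i} ⊆ (Finset.Icc (j - N) (j + N) : Finset ℤ) := fun k hk => by
      rw [Finset.coe_Icc, mem_Icc]
      have h₁ := hκ k j (hk.trans hj.symm)
      have h₂ := hκ j k (hj.trans hk.symm)
      omega
    refine (measure_mono hsub).trans ?_
    rw [Measure.count_apply_finset, Int.card_Icc]
    exact_mod_cast (by omega)
  refine Measure.le_iff.2 fun s hs => ?_
  rw [← Measure.tsum_indicator_apply_singleton _ s hs, ← Measure.tsum_indicator_apply_singleton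
    (((2 * N + 1 : ℕ) : ℝ≥0∞) • Measure.count) s hs]
  refine ENNReal.tsum_le_tsum fun i => indicator_le_indicator ?_
  rw [Measure.map_apply (measurable_of_countable κ) (measurableSet_singleton i)]
  simpa using hfiber i

lemma eLpNorm_comp_le_of_fibers {κ : ℤ → ℤ} {N : ℕ} (hκ : ∀ j j', κ j = κ j' → j ≤ j' + N)
    (q : ℝ≥0∞) (x : ℤ → ℝ≥0∞) :
    eLpNorm (fun j => x (κ j)) q Measure.count ≤
      ((2 * N + 1 : ℕ) : ℝ≥0∞) ^ (1 / q).toReal * eLpNorm x q Measure.count := by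
  have h := eLpNorm_le_of_measure_le_smul (map_count_le_of_fibers hκ) (f := x) (p := q)
  rwa [eLpNorm_map_measure (measurable_of_countable x).aestronglyMeasurable
    (measurable_of_countable κ).aemeasurable] at h

namespace HasPowerGrowth

variable {ρ : ℝ → ℝ} {α β : ℝ}

lemma exists_le_add_of_le_two_mul (hρ : HasPowerGrowth ρ α β) (hα : 0 < α) :
    ∃ N : ℕ, ∀ j j' : ℤ, ρ (2 ^ j) ≤ 2 * ρ (2 ^ j') → j ≤ j' + N := by
  obtain ⟨hpos, C, hC, h⟩ := hρ
  obtain ⟨N, hN⟩ := pow_unbounded_of_one_lt (2 * C) (Real.one_lt_rpow one_lt_two hα)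
  refine ⟨N, fun j j' hjj' => ?_⟩
  by_contra! hlt
  have hle : (2 : ℝ) ^ j' ≤ 2 ^ j := zpow_le_zpow_right₀ one_le_two (by omega)
  have hratio : (2 : ℝ) ^ N ≤ 2 ^ j / 2 ^ j' := by
    rw [← zpow_sub₀ two_ne_zero, ← zpow_natCast]
    exact zpow_le_zpow_right₀ one_le_two (by omega)
  have hj' := hpos _ (by positivity : (0 : ℝ) < 2 ^ j')
  refine absurd (h _ _ (by positivity) hle).2 (not_le.2 ?_)
  calc C * ρ (2 ^ j) ≤ C * (2 * ρ (2 ^ j')) := by gcongr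
    _ = 2 * C * ρ (2 ^ j') := by ring
    _ < ((2 : ℝ) ^ α) ^ N * ρ (2 ^ j') := by gcongr
    _ = ((2 : ℝ) ^ N) ^ α * ρ (2 ^ j') := by rw [Real.rpow_pow_comm zero_le_two]
    _ ≤ (2 ^ j / 2 ^ j') ^ α * ρ (2 ^ j') := by gcongr

lemma tendsto_atTop (hρ : HasPowerGrowth ρ α β) (hα : 0 < α) : Tendsto ρ atTop atTop := by
  obtain ⟨hpos, C, hC, h⟩ := hρ
  have hlim : Tendsto (fun t : ℝ => t ^ α * (ρ 1 / C)) atTop atTop :=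
    (tendsto_rpow_atTop hα).atTop_mul_const (div_pos (hpos 1 one_pos) hC)
  refine tendsto_atTop_mono' _ ?_ hlim
  filter_upwards [eventually_ge_atTop 1] with t ht
  have := (h 1 t one_pos ht).2
  rw [div_one] at this
  rw [← mul_div_assoc, div_le_iff₀ hC]
  linarith

lemma tendsto_nhdsGT_zero (hρ : HasPowerGrowth ρ α β) (hα : 0 < α) :
    Tendsto ρ (nhdsWithin 0 (Ioi 0)) (nhds 0) := by
  obtain ⟨hpos, C, _, h⟩ := hρ
  have hlim : Tendsto (fun t : ℝ => t ^ α * (C * ρ 1)) (nhdsWithin 0 (Ioi 0)) (nhds 0) := by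
    simpa [Real.zero_rpow hα.ne'] using ((Real.continuousAt_rpow_const 0 α
      (Or.inr hα.le)).tendsto.mono_left nhdsWithin_le_nhds).mul_const (C * ρ 1)
  refine tendsto_of_tendsto_of_tendsto_of_le_of_le' tendsto_const_nhds hlim ?_ ?_
  · filter_upwards [self_mem_nhdsWithin] with t ht using (hpos t ht).le
  · filter_upwards [Ioo_mem_nhdsGT one_pos] with t ht
    have := (h t 1 ht.1 ht.2.le).2
    rwa [Real.div_rpow zero_le_one ht.1.le, Real.one_rpow, one_div,
      inv_mul_le_iff₀ (Real.rpow_pos_of_pos ht.1 α)] at this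

lemma exists_zpow_mem_Icc (hρ : HasPowerGrowth ρ α β) (hα : 0 < α) (hβ : 0 ≤ β) :
    ∃ L ≥ 1, ∀ s > 0, ∃ j : ℤ, s ∈ Icc (ρ (2 ^ j)) (L * ρ (2 ^ j)) := by
  obtain ⟨C, _, hρC⟩ := hρ.le_mul_of_le_mul hβ (by linarith) le_rfl
  refine ⟨max (C * 2 ^ β) 1, le_max_right _ _, fun s hs => ?_⟩
  have hbdd : ∃ b : ℤ, ∀ j : ℤ, ρ (2 ^ j) ≤ s → j ≤ b := by
    obtain ⟨T, hT⟩ := eventually_atTop.1 ((hρ.tendsto_atTop hα).eventually_gt_atTop s)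
    obtain ⟨n, hn⟩ := pow_unbounded_of_one_lt T one_lt_two
    refine ⟨n, fun j hj => ?_⟩
    by_contra! hlt
    refine (hT (2 ^ j) (hn.le.trans ?_)).not_ge hj
    rw [← zpow_natCast]
    exact zpow_le_zpow_right₀ one_le_two hlt.le
  have hne : ∃ j : ℤ, ρ (2 ^ j) ≤ s := by
    obtain ⟨δ, hδ, hδs⟩ := mem_nhdsGT_iff_exists_Ioo_subset.1
      ((hρ.tendsto_nhdsGT_zero hα).eventually_lt_const hs)
    obtain ⟨n, hn⟩ := exists_pow_lt_of_lt_one hδ (inv_lt_one_of_one_lt₀ (one_lt_two (α := ℝ)))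
    have hδn : ((2 : ℝ) ^ (-(n : ℤ))) ∈ Ioo 0 δ :=
      ⟨by positivity, by rwa [zpow_neg, zpow_natCast, ← inv_pow]⟩
    exact ⟨-n, (hδs hδn).le⟩
  obtain ⟨j, hj, hmax⟩ := Int.exists_greatest_of_bdd hbdd hne
  refine ⟨j, hj, ?_⟩
  have hlt : s < ρ (2 ^ (j + 1)) := by
    by_contra! hle
    have := hmax _ hle
    omega
  have hpos := hρ.pos (by positivity : (0 : ℝ) < 2 ^ j)
  calc s ≤ ρ (2 ^ (j + 1)) := hlt.le
    _ ≤ C * 2 ^ β * ρ (2 ^ j) := by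
        refine hρC _ _ 2 (by positivity) (by positivity) ?_ ?_
        · rw [zpow_add_one₀ two_ne_zero, mul_comm]
        · rw [zpow_add_one₀ two_ne_zero]
          linarith [(by positivity : (0 : ℝ) < 2 ^ j)]
    _ ≤ _ := by gcongr; exact le_max_left _ _

lemma exists_eLpNorm_comp_le (hρ : HasPowerGrowth ρ α β) (hα : 0 < α) (q : ℝ≥0∞) (C m : ℝ) :
    ∃ D : ℝ≥0∞, D ≠ ∞ ∧ ∀ F : ℝ → ℝ≥0∞, HasModerateGrowth C m F →
      eLpNorm (fun j : ℤ => F (ρ (2 ^ j))) q Measure.count ≤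
        D * eLpNorm (fun j : ℤ => F (2 ^ j)) q Measure.count := by
  obtain ⟨N, hN⟩ := hρ.exists_le_add_of_le_two_mul hα
  set κ : ℤ → ℤ := fun j => Int.log 2 (ρ (2 ^ j))
  have hκ : ∀ j, ρ (2 ^ j) ∈ Icc ((2 : ℝ) ^ κ j) (2 * 2 ^ κ j) := fun j =>
    mem_Icc_zpow_intLog (hρ.pos (by positivity))
  have hfib : ∀ j j', κ j = κ j' → j ≤ j' + N := fun j j' h =>
    hN j j' ((hκ j).2.trans (by rw [h]; linarith [(hκ j').1]))
  refine ⟨ENNReal.ofReal (C * 2 ^ m) * ((2 * N + 1 : ℕ) : ℝ≥0∞) ^ (1 / q).toReal,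
    by finiteness, fun F hF => ?_⟩
  rw [mul_assoc]
  exact (eLpNorm_le_mul_of_forall_le ENNReal.ofReal_ne_top fun j =>
    (hF.le_of_mem_Icc one_le_two (by positivity) (hκ j)).2).trans
      (mul_le_mul' le_rfl (eLpNorm_comp_le_of_fibers hfib q fun j => F (2 ^ j)))

lemma exists_eLpNorm_le_comp (hρ : HasPowerGrowth ρ α β) (hα : 0 < α) (hβ : 0 ≤ β) (q : ℝ≥0∞)
    (C m : ℝ) :
    ∃ D : ℝ≥0∞, D ≠ ∞ ∧ ∀ F : ℝ → ℝ≥0∞, HasModerateGrowth C m F →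
      eLpNorm (fun j : ℤ => F (2 ^ j)) q Measure.count ≤
        D * eLpNorm (fun j : ℤ => F (ρ (2 ^ j))) q Measure.count := by
  obtain ⟨L, hL, h⟩ := hρ.exists_zpow_mem_Icc hα hβ
  choose κ hκ using fun k : ℤ => h (2 ^ k) (by positivity)
  obtain ⟨N, hN⟩ := pow_unbounded_of_one_lt L one_lt_two
  have hfib : ∀ k k', κ k = κ k' → k ≤ k' + N := by
    intro k k' hkk'
    have : (2 : ℝ) ^ k ≤ 2 ^ (k' + N) := by
      calc (2 : ℝ) ^ k ≤ L * ρ (2 ^ κ k) := (hκ k).2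
        _ ≤ 2 ^ N * 2 ^ k' := by
            rw [hkk']
            exact mul_le_mul hN.le (hκ k').1 (hρ.pos (by positivity)).le (by positivity)
        _ = 2 ^ (k' + N) := by rw [zpow_add₀ two_ne_zero, zpow_natCast, mul_comm]
    exact (zpow_le_zpow_iff_right₀ _root_.one_lt_two).1 this
  refine ⟨ENNReal.ofReal (C * L ^ m) * ((2 * N + 1 : ℕ) : ℝ≥0∞) ^ (1 / q).toReal,
    by finiteness, fun F hF => ?_⟩
  rw [mul_assoc]
  exact (eLpNorm_le_mul_of_forall_le ENNReal.ofReal_ne_top fun k =>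
    (hF.le_of_mem_Icc hL (hρ.pos (by positivity)) (hκ k)).2).trans
      (mul_le_mul' le_rfl (eLpNorm_comp_le_of_fibers hfib q fun j => F (ρ (2 ^ j))))

lemma exists_haarNorm_comp_equiv (hρ : HasPowerGrowth ρ α β) (hα : 0 < α) (hβ : 0 ≤ β)
    (q : ℝ≥0∞) {C : ℝ} (hC : 0 ≤ C) (m : ℝ) :
    ∃ D : ℝ≥0∞, D ≠ ∞ ∧ ∀ F : ℝ → ℝ≥0∞, HasModerateGrowth C m F →
      haarNorm q (Ioi 0) (fun t => F (ρ t)) ≤ D * haarNorm q (Ioi 0) F ∧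
      haarNorm q (Ioi 0) F ≤ D * haarNorm q (Ioi 0) (fun t => F (ρ t)) := by
  obtain ⟨C', -, hC'⟩ := hρ.exists_hasModerateGrowth_comp hα.le hβ (m := m)
  obtain ⟨D₁, hD₁, h₁⟩ := HasModerateGrowth.exists_haarNorm_equiv_eLpNorm q C m
  obtain ⟨D₂, hD₂, h₂⟩ := HasModerateGrowth.exists_haarNorm_equiv_eLpNorm q (C * C') (β * m)
  obtain ⟨D₃, hD₃, h₃⟩ := hρ.exists_eLpNorm_comp_le hα q C m
  obtain ⟨D₄, hD₄, h₄⟩ := hρ.exists_eLpNorm_le_comp hα hβ q C m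
  refine ⟨max (D₂ * D₃ * D₁) (D₁ * D₄ * D₂), max_ne_top (by finiteness) (by finiteness),
    fun F hF => ⟨?_, ?_⟩⟩
  · calc haarNorm q (Ioi 0) (fun t => F (ρ t)) ≤ D₂ * (D₃ * (D₁ * haarNorm q (Ioi 0) F)) :=
          (h₂ _ (hC' C hC F hF)).1.trans (mul_le_mul' le_rfl ((h₃ F hF).trans
            (mul_le_mul' le_rfl (h₁ F hF).2)))
      _ ≤ _ := by rw [← mul_assoc, ← mul_assoc]; gcongr; exact le_max_left _ _
  · calc haarNorm q (Ioi 0) F ≤ D₁ * (D₄ * (D₂ * haarNorm q (Ioi 0) (fun t => F (ρ t)))) :=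
          (h₁ F hF).1.trans (mul_le_mul' le_rfl ((h₄ F hF).trans
            (mul_le_mul' le_rfl (h₂ _ (hC' C hC F hF)).2)))
      _ ≤ _ := by rw [← mul_assoc, ← mul_assoc]; gcongr; exact le_max_right _ _

end HasPowerGrowth

/-! ### The maximal function -/

/-- The least majorant of `F` that changes at most by the factor `L ^ ε` under dilation by `L`,
evaluated at `t`. Pointwise estimates only have to be proved for it, as it has a norm comparable to
that of `F`. -/
def powerMax (ε : ℝ) (F : ℝ → ℝ≥0∞) (t : ℝ) : ℝ≥0∞ :=
  ⨆ u : Ioi (0 : ℝ), ENNReal.ofReal (min (u / t) (t / u) ^ ε) * F u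

section powerMax

variable {ε : ℝ} {F : ℝ → ℝ≥0∞} {t u : ℝ}

lemma le_max_rpow_mul_powerMax (hu : 0 < u) (ht : 0 < t) :
    F u ≤ ENNReal.ofReal (max (t / u) (u / t) ^ ε) * powerMax ε F t := by
  have hle := le_iSup (fun u : Ioi (0 : ℝ) => ENNReal.ofReal (min (u / t) (t / u) ^ ε) * F u)
    ⟨u, hu⟩
  have hinv := antitoneOn_inv_pos.map_min (div_pos hu ht) (div_pos ht hu)
  rw [inv_div, inv_div] at hinv
  rw [← hinv, Real.inv_rpow (by positivity), ENNReal.ofReal_inv_of_pos (by positivity)]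
  rwa [← ENNReal.inv_mul_le_iff (by simp)
    (ENNReal.inv_ne_top.2 (ENNReal.ofReal_pos.2 (by positivity)).ne'), inv_inv]

lemma le_rpow_mul_powerMax_of_le (hu : 0 < u) (hut : u ≤ t) :
    F u ≤ ENNReal.ofReal ((t / u) ^ ε) * powerMax ε F t := by
  have ht : 0 < t := hu.trans_le hut
  have hmax : max (t / u) (u / t) = t / u :=
    max_eq_left (((div_le_one ht).2 hut).trans ((one_le_div hu).2 hut))
  exact hmax ▸ le_max_rpow_mul_powerMax hu ht

lemma le_rpow_mul_powerMax_of_ge (ht : 0 < t) (htu : t ≤ u) :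
    F u ≤ ENNReal.ofReal ((u / t) ^ ε) * powerMax ε F t := by
  have hu : 0 < u := ht.trans_le htu
  have hmax : max (t / u) (u / t) = u / t :=
    max_eq_right (((div_le_one hu).2 htu).trans ((one_le_div ht).2 htu))
  exact hmax ▸ le_max_rpow_mul_powerMax hu ht

lemma powerMax_hasModerateGrowth (hε : 0 ≤ ε) : HasModerateGrowth 1 ε (powerMax ε F) := by
  intro s t L hs ht hst hts
  have hL : 0 < L := pos_of_mul_pos_left (hs.trans_le hst) ht.le
  rw [powerMax, powerMax, ENNReal.mul_iSup]
  refine iSup_mono fun ⟨u, (hu : 0 < u)⟩ => ?_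
  rw [← mul_assoc, one_mul, ← ENNReal.ofReal_mul (by positivity),
    ← Real.mul_rpow hL.le (by positivity), mul_min_of_nonneg _ _ hL.le]
  gcongr ENNReal.ofReal (min ?_ ?_ ^ ε) * F u
  · rw [← mul_div_assoc, div_le_div_iff₀ hs ht]
    nlinarith
  · rw [← mul_div_assoc]
    gcongr

end powerMax

lemma eLpNorm_iSup_mul_sub_le {q : ℝ≥0∞} (hq : 0 < q) (w x : ℤ → ℝ≥0∞) :
    eLpNorm (fun k => ⨆ j, w (k - j) * x j) q Measure.count ≤
      eLpNorm w q Measure.count * eLpNorm x q Measure.count := by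
  rcases eq_or_ne q ∞ with rfl | hq'
  · simp only [eLpNorm_exponent_top, eLpNormEssSup_count, enorm_eq_self]
    exact iSup_le fun k => iSup_le fun j => mul_le_mul' (le_iSup w _) (le_iSup x j)
  have hp : 0 < q.toReal := ENNReal.toReal_pos hq.ne' hq'
  simp only [eLpNorm_eq_lintegral_rpow_enorm_toReal hq.ne' hq', enorm_eq_self, lintegral_count]
  rw [← ENNReal.mul_rpow_of_nonneg _ _ (by positivity)]
  gcongr ?_ ^ _
  calc ∑' k, (⨆ j, w (k - j) * x j) ^ q.toReal
      = ∑' k, ⨆ j, (w (k - j) * x j) ^ q.toReal := tsum_congr fun k =>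
        (ENNReal.orderIsoRpow q.toReal hp).map_iSup _
    _ ≤ ∑' k, ∑' j, (w (k - j) * x j) ^ q.toReal := ENNReal.tsum_le_tsum fun k =>
        iSup_le fun j => ENNReal.le_tsum j
    _ = ∑' j, ∑' k, w (k - j) ^ q.toReal * x j ^ q.toReal := by
        rw [ENNReal.tsum_comm]
        simp only [ENNReal.mul_rpow_of_nonneg _ _ hp.le]
    _ = ∑' j, (∑' k, w k ^ q.toReal) * x j ^ q.toReal := tsum_congr fun j => by
        rw [ENNReal.tsum_mul_right, ← (Equiv.subRight j).tsum_eq fun k => w k ^ q.toReal]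
        rfl
    _ = _ := ENNReal.tsum_mul_left

lemma tsum_ofReal_pow_natAbs_ne_top {x : ℝ} (hx : 0 ≤ x) (hx' : x < 1) :
    ∑' n : ℤ, ENNReal.ofReal (x ^ n.natAbs) ≠ ∞ := by
  have hgeom : Summable fun n : ℕ => x ^ n := summable_geometric_of_lt_one hx hx'
  have hsum : Summable fun n : ℤ => x ^ n.natAbs :=
    Summable.of_nat_of_neg (by simpa using hgeom) (by simpa using hgeom)
  exact hsum.tsum_ofReal_ne_top

lemma eLpNorm_ofReal_pow_natAbs_ne_top {q : ℝ≥0∞} (hq : 0 < q) {x : ℝ} (hx : 0 ≤ x)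
    (hx' : x < 1) :
    eLpNorm (fun n : ℤ => ENNReal.ofReal (x ^ n.natAbs)) q Measure.count ≠ ∞ := by
  rcases eq_or_ne q ∞ with rfl | hq'
  · rw [eLpNorm_exponent_top, eLpNormEssSup_count]
    refine ne_top_of_le_ne_top one_ne_top (iSup_le fun n => ?_)
    simpa using pow_le_one₀ hx hx'.le
  have hp : 0 < q.toReal := ENNReal.toReal_pos hq.ne' hq'
  simp only [eLpNorm_eq_lintegral_rpow_enorm_toReal hq.ne' hq', enorm_eq_self, lintegral_count]
  refine ENNReal.rpow_ne_top_of_nonneg (by positivity) ?_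
  convert tsum_ofReal_pow_natAbs_ne_top (Real.rpow_nonneg hx q.toReal)
    (Real.rpow_lt_one hx hx' hp) using 3 with n
  rw [ENNReal.ofReal_rpow_of_nonneg (by positivity) hp.le, Real.rpow_pow_comm hx]

lemma min_div_zpow_le {u : ℝ} (hu : 0 < u) (k : ℤ) :
    min (u / 2 ^ k) (2 ^ k / u) ≤ 2 * 2⁻¹ ^ (k - Int.log 2 u).natAbs := by
  obtain ⟨hju, huj⟩ := mem_Icc_zpow_intLog hu
  set j := Int.log 2 u
  have hnat : ∀ {i i' : ℤ} {n : ℕ}, i' = i + n → (2 : ℝ) ^ i' = 2 ^ i * 2 ^ n := by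
    rintro i - n rfl
    rw [zpow_add₀ two_ne_zero, zpow_natCast]
  rcases le_total j k with hjk | hkj
  · refine (min_le_left _ _).trans ?_
    rw [hnat (by omega : k = j + (k - j).natAbs), inv_pow, ← div_eq_mul_inv,
      div_le_div_iff₀ (by positivity) (by positivity)]
    nlinarith [pow_pos (two_pos (α := ℝ)) (k - j).natAbs]
  · refine (min_le_right _ _).trans ?_
    rw [hnat (by omega : j = k + (k - j).natAbs)] at hju
    rw [inv_pow, ← div_eq_mul_inv, div_le_div_iff₀ hu (by positivity)]
    linarith

namespace HasModerateGrowth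

lemma powerMax_zpow_le {C m ε : ℝ} {F : ℝ → ℝ≥0∞} (hF : HasModerateGrowth C m F) (hε : 0 ≤ ε)
    (k : ℤ) :
    powerMax ε F (2 ^ k) ≤ ENNReal.ofReal (2 ^ ε) * ENNReal.ofReal (C * 2 ^ m) *
      ⨆ j, ENNReal.ofReal ((2⁻¹ ^ ε) ^ (k - j).natAbs) * F (2 ^ j) := by
  refine iSup_le fun ⟨u, (hu : 0 < u)⟩ => ?_
  have hFu := (hF.le_of_mem_Icc one_le_two (by positivity) (mem_Icc_zpow_intLog hu)).2
  set j := Int.log 2 u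
  have hmin : ENNReal.ofReal (min (u / 2 ^ k) (2 ^ k / u) ^ ε) ≤
      ENNReal.ofReal (2 ^ ε) * ENNReal.ofReal ((2⁻¹ ^ ε) ^ (k - j).natAbs) := by
    rw [← ENNReal.ofReal_mul (by positivity), Real.rpow_pow_comm (by positivity),
      ← Real.mul_rpow (by positivity) (by positivity)]
    gcongr
    exact min_div_zpow_le hu k
  calc ENNReal.ofReal (min (u / 2 ^ k) (2 ^ k / u) ^ ε) * F u
      ≤ (ENNReal.ofReal (2 ^ ε) * ENNReal.ofReal ((2⁻¹ ^ ε) ^ (k - j).natAbs)) *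
          (ENNReal.ofReal (C * 2 ^ m) * F (2 ^ j)) := by gcongr
    _ = ENNReal.ofReal (2 ^ ε) * ENNReal.ofReal (C * 2 ^ m) *
          (ENNReal.ofReal ((2⁻¹ ^ ε) ^ (k - j).natAbs) * F (2 ^ j)) := by ring
    _ ≤ _ := by
        gcongr
        exact le_iSup (fun j => ENNReal.ofReal ((2⁻¹ ^ ε) ^ (k - j).natAbs) * F (2 ^ j)) j

lemma exists_haarNorm_powerMax_le {q : ℝ≥0∞} (hq : 0 < q) (C m : ℝ) {ε : ℝ} (hε : 0 < ε) :
    ∃ D : ℝ≥0∞, D ≠ ∞ ∧ ∀ F : ℝ → ℝ≥0∞, HasModerateGrowth C m F →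
      haarNorm q (Ioi 0) (powerMax ε F) ≤ D * haarNorm q (Ioi 0) F := by
  obtain ⟨D₁, hD₁, h₁⟩ := exists_haarNorm_equiv_eLpNorm q 1 ε
  obtain ⟨D₂, hD₂, h₂⟩ := exists_haarNorm_equiv_eLpNorm q C m
  set w : ℤ → ℝ≥0∞ := fun n => ENNReal.ofReal ((2⁻¹ ^ ε) ^ n.natAbs)
  have hw : eLpNorm w q Measure.count ≠ ∞ := eLpNorm_ofReal_pow_natAbs_ne_top hq (by positivity)
    (Real.rpow_lt_one (by positivity) (by norm_num) hε)
  set K : ℝ≥0∞ := ENNReal.ofReal (2 ^ ε) * ENNReal.ofReal (C * 2 ^ m)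
  have hK : K ≠ ∞ := by finiteness
  refine ⟨D₁ * (K * (eLpNorm w q Measure.count * D₂)), by finiteness, fun F hF => ?_⟩
  calc haarNorm q (Ioi 0) (powerMax ε F)
      ≤ D₁ * eLpNorm (fun k : ℤ => powerMax ε F (2 ^ k)) q Measure.count :=
        (h₁ _ (powerMax_hasModerateGrowth hε.le)).1
    _ ≤ D₁ * (K * eLpNorm (fun k => ⨆ j, w (k - j) * F (2 ^ j)) q Measure.count) := by
        gcongr
        exact eLpNorm_le_mul_of_forall_le hK (hF.powerMax_zpow_le hε.le)
    _ ≤ D₁ * (K * (eLpNorm w q Measure.count * (D₂ * haarNorm q (Ioi 0) F))) := by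
        gcongr
        exact (eLpNorm_iSup_mul_sub_le hq w _).trans (mul_le_mul' le_rfl (h₂ F hF).2)
    _ = _ := by simp only [mul_assoc]

end HasModerateGrowth

/-! ### The `K`-functional -/

/-- An extended-valued quasi-seminorm on an abelian group: what the real method needs of the
quasi-norm recorded by a `QuasiBanach`. -/
structure IsAddGroupQuasiSeminorm {G : Type*} [AddCommGroup G] (N : G → ℝ≥0∞) : Prop where
  map_zero : N 0 = 0
  map_neg : ∀ x, N (-x) = N x
  quasi : ∃ C : ℝ≥0∞, C ≠ ∞ ∧ ∀ x y, N (x + y) ≤ C * (N x + N y)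

lemma QuasiBanach.isAddGroupQuasiSeminorm (A : QuasiBanach E) : IsAddGroupQuasiSeminorm A.N where
  map_zero := A.zero
  map_neg x := by simpa using A.smul (-1) x
  quasi := A.quasi.imp fun _ h => h.2

section Kf

variable {G : Type*} [AddCommGroup G] {N₀ N₁ : G → ℝ≥0∞}

lemma Kf_mono (N₀ N₁ : G → ℝ≥0∞) (f : G) : Monotone fun t => Kf N₀ N₁ t f :=
  fun _ _ h => iInf_mono fun _ => by gcongr

lemma Kf_mul_le (N₀ N₁ : G → ℝ≥0∞) (f : G) {l : ℝ} (hl : 1 ≤ l) (t : ℝ) :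
    Kf N₀ N₁ (l * t) f ≤ ENNReal.ofReal l * Kf N₀ N₁ t f := by
  rw [Kf, Kf, ENNReal.mul_iInf (by simp)]
  refine iInf_mono fun g => ?_
  rw [mul_add, ENNReal.ofReal_mul (by linarith), mul_assoc]
  gcongr
  exact le_mul_of_one_le_left zero_le (by simpa using hl)

lemma Kf_hasModerateGrowth (N₀ N₁ : G → ℝ≥0∞) (f : G) :
    HasModerateGrowth 1 1 fun t => Kf N₀ N₁ t f := by
  intro u v L hu hv huv hvu
  have hL : 1 ≤ L := by
    by_contra! hL
    nlinarith
  rw [one_mul, Real.rpow_one]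
  exact (Kf_mono N₀ N₁ f huv).trans (Kf_mul_le N₀ N₁ f hL v)

lemma Kf_le_left (hN₁ : IsAddGroupQuasiSeminorm N₁) (t : ℝ) (f : G) : Kf N₀ N₁ t f ≤ N₀ f :=
  (iInf_le _ f).trans (by simp [hN₁.map_zero])

lemma Kf_le_right (hN₀ : IsAddGroupQuasiSeminorm N₀) (t : ℝ) (f : G) :
    Kf N₀ N₁ t f ≤ ENNReal.ofReal t * N₁ f :=
  (iInf_le _ 0).trans (by simp [hN₀.map_zero])

lemma exists_Kf_add_le (hN₀ : IsAddGroupQuasiSeminorm N₀) (hN₁ : IsAddGroupQuasiSeminorm N₁) :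
    ∃ C : ℝ≥0∞, C ≠ ∞ ∧ ∀ (t : ℝ) (f g : G),
      Kf N₀ N₁ t (f + g) ≤ C * (Kf N₀ N₁ t f + Kf N₀ N₁ t g) := by
  obtain ⟨C₀, hC₀, h₀⟩ := hN₀.quasi
  obtain ⟨C₁, hC₁, h₁⟩ := hN₁.quasi
  have hC : C₀ + C₁ ≠ ∞ := ENNReal.add_ne_top.2 ⟨hC₀, hC₁⟩
  refine ⟨C₀ + C₁, hC, fun t f g => ?_⟩
  simp only [Kf, ENNReal.iInf_add, ENNReal.add_iInf, ENNReal.mul_iInf fun h => absurd h hC]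
  refine le_iInf₂ fun g' f' => iInf_le_of_le (f' + g') ?_
  rw [add_sub_add_comm]
  calc N₀ (f' + g') + ENNReal.ofReal t * N₁ (f - f' + (g - g'))
      ≤ (C₀ + C₁) * (N₀ f' + N₀ g') +
        ENNReal.ofReal t * ((C₀ + C₁) * (N₁ (f - f') + N₁ (g - g'))) := by
        gcongr
        · exact (h₀ _ _).trans (by gcongr; exact le_self_add)
        · exact (h₁ _ _).trans (by gcongr; exact le_add_self)
    _ = _ := by ring

lemma exists_mul_Kf_le_mul_Kf
    (hN₀ : IsAddGroupQuasiSeminorm N₀) (hN₁ : IsAddGroupQuasiSeminorm N₁) :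
    ∃ Q : ℝ≥0∞, Q ≠ ∞ ∧ ∀ (M₀ M₁ : G → ℝ≥0∞) (s t : ℝ) (x C : ℝ≥0∞), C ≠ ∞ →
      (∀ g, x * Kf N₀ N₁ t g ≤ C * M₀ g) →
      (∀ g, x * Kf N₀ N₁ t g ≤ C * (ENNReal.ofReal s * M₁ g)) →
        ∀ f, x * Kf N₀ N₁ t f ≤ Q * C * Kf M₀ M₁ s f := by
  obtain ⟨Q, hQ, h⟩ := exists_Kf_add_le hN₀ hN₁
  refine ⟨Q, hQ, fun M₀ M₁ s t x C hC h₀ h₁ f => ?_⟩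
  rw [Kf.eq_def M₀, ENNReal.mul_iInf fun h => absurd h (ENNReal.mul_ne_top hQ hC)]
  refine le_iInf fun g => ?_
  calc x * Kf N₀ N₁ t f = x * Kf N₀ N₁ t (g + (f - g)) := by rw [add_sub_cancel]
    _ ≤ x * (Q * (Kf N₀ N₁ t g + Kf N₀ N₁ t (f - g))) := by gcongr; exact h _ _ _
    _ = Q * (x * Kf N₀ N₁ t g + x * Kf N₀ N₁ t (f - g)) := by ring
    _ ≤ Q * (C * M₀ g + C * (ENNReal.ofReal s * M₁ (f - g))) := by
        exact mul_le_mul_right (add_le_add (h₀ g) (h₁ (f - g))) Q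
    _ = _ := by ring

end Kf

lemma ofReal_mul_le_mul_rpow {u t p : ℝ} (hu : 0 < u) (hut : u ≤ t) (hp : p ≤ 1) {x B : ℝ≥0∞}
    (h : ENNReal.ofReal t * x ≤ B) : ENNReal.ofReal u * x ≤ B * ENNReal.ofReal ((u / t) ^ p) := by
  have ht : 0 < t := hu.trans_le hut
  have hle : u / t ≤ (u / t) ^ p := by
    simpa using Real.rpow_le_rpow_of_exponent_ge (by positivity) ((div_le_one ht).2 hut) hp
  calc ENNReal.ofReal u * x = ENNReal.ofReal t * x * ENNReal.ofReal (u / t) := by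
        rw [mul_right_comm, ← ENNReal.ofReal_mul ht.le, mul_div_cancel₀ _ ht.ne']
    _ ≤ B * ENNReal.ofReal ((u / t) ^ p) := by gcongr

/-- `k` is dominated by `B (u/t) ^ p` to the left of `t` and by `B (u/t) ^ P` to its right. For
`k = K(·, f)` and `0 < p < P < 1` this localizes `f` at the scale `t`. -/
def PowerBound (k : ℝ → ℝ≥0∞) (t : ℝ) (B : ℝ≥0∞) (p P : ℝ) : Prop :=
  (∀ u, 0 < u → u ≤ t → k u ≤ B * ENNReal.ofReal ((u / t) ^ p)) ∧
    ∀ u, t ≤ u → k u ≤ B * ENNReal.ofReal ((u / t) ^ P)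

section decomposition

variable {G : Type*} [AddCommGroup G] {N₀ N₁ : G → ℝ≥0∞} {t p P : ℝ} {B Q : ℝ≥0∞} {f g : G}

lemma PowerBound.of_near_left (hN₀ : IsAddGroupQuasiSeminorm N₀) (hN₁ : IsAddGroupQuasiSeminorm N₁)
    (hQ : ∀ (t : ℝ) (f g : G), Kf N₀ N₁ t (f + g) ≤ Q * (Kf N₀ N₁ t f + Kf N₀ N₁ t g))
    (hp : p ≤ 1) (hf : PowerBound (fun u => Kf N₀ N₁ u f) t B p P)
    (hg : N₀ g ≤ 2 * B) (hfg : ENNReal.ofReal t * N₁ (f - g) ≤ 2 * B) :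
    PowerBound (fun u => Kf N₀ N₁ u g) t ((3 * Q + 2) * B) p 0 := by
  refine ⟨fun u hu hut => ?_, fun u _ => ?_⟩
  · calc Kf N₀ N₁ u g = Kf N₀ N₁ u (f + -(f - g)) := by rw [neg_sub, add_sub_cancel]
      _ ≤ Q * (Kf N₀ N₁ u f + Kf N₀ N₁ u (-(f - g))) := hQ _ _ _
      _ ≤ Q * (B * ENNReal.ofReal ((u / t) ^ p) + 2 * B * ENNReal.ofReal ((u / t) ^ p)) := by
        gcongr
        · exact hf.1 u hu hut
        · rw [← hN₁.map_neg] at hfg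
          exact (Kf_le_right hN₀ u _).trans (ofReal_mul_le_mul_rpow hu hut hp hfg)
      _ = 3 * Q * B * ENNReal.ofReal ((u / t) ^ p) := by ring
      _ ≤ _ := by gcongr; exact le_self_add
  · calc Kf N₀ N₁ u g ≤ 2 * B := (Kf_le_left hN₁ u g).trans hg
      _ ≤ (3 * Q + 2) * B := by gcongr; exact le_add_self
      _ = _ := by simp

lemma PowerBound.of_near_right (hN₀ : IsAddGroupQuasiSeminorm N₀) (hN₁ : IsAddGroupQuasiSeminorm N₁)
    (hQ : ∀ (t : ℝ) (f g : G), Kf N₀ N₁ t (f + g) ≤ Q * (Kf N₀ N₁ t f + Kf N₀ N₁ t g))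
    (ht : 0 < t) (hP : 0 ≤ P) (hf : PowerBound (fun u => Kf N₀ N₁ u f) t B p P)
    (hg : N₀ g ≤ 2 * B) (hfg : ENNReal.ofReal t * N₁ (f - g) ≤ 2 * B) :
    PowerBound (fun u => Kf N₀ N₁ u (f - g)) t ((3 * Q + 2) * B) 1 P := by
  refine ⟨fun u hu hut => ?_, fun u htu => ?_⟩
  · calc Kf N₀ N₁ u (f - g) ≤ 2 * B * ENNReal.ofReal ((u / t) ^ (1 : ℝ)) :=
        (Kf_le_right hN₀ u _).trans (ofReal_mul_le_mul_rpow hu hut le_rfl hfg)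
      _ ≤ _ := by gcongr; exact le_add_self
  · have hut : 1 ≤ ENNReal.ofReal ((u / t) ^ P) :=
      ENNReal.one_le_ofReal.2 (Real.one_le_rpow ((one_le_div ht).2 htu) hP)
    calc Kf N₀ N₁ u (f - g) ≤ Q * (Kf N₀ N₁ u f + Kf N₀ N₁ u (-g)) := by
          rw [sub_eq_add_neg]
          exact hQ _ _ _
      _ ≤ Q * (B * ENNReal.ofReal ((u / t) ^ P) + 2 * B * ENNReal.ofReal ((u / t) ^ P)) := by
        gcongr
        · exact hf.2 u htu
        · rw [← hN₀.map_neg] at hg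
          exact ((Kf_le_left hN₁ u _).trans hg).trans (le_mul_of_one_le_right zero_le hut)
      _ = 3 * Q * B * ENNReal.ofReal ((u / t) ^ P) := by ring
      _ ≤ _ := by gcongr; exact le_self_add

lemma exists_forall_exists_powerBound (hN₀ : IsAddGroupQuasiSeminorm N₀)
    (hN₁ : IsAddGroupQuasiSeminorm N₁) :
    ∃ D : ℝ≥0∞, D ≠ ∞ ∧ ∀ (f : G) (t : ℝ) (B : ℝ≥0∞) (p P : ℝ), 0 < t → B ≠ 0 → B ≠ ∞ →
      p ≤ 1 → 0 ≤ P → PowerBound (fun u => Kf N₀ N₁ u f) t B p P →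
        ∃ g, PowerBound (fun u => Kf N₀ N₁ u g) t (D * B) p 0 ∧
          PowerBound (fun u => Kf N₀ N₁ u (f - g)) t (D * B) 1 P := by
  obtain ⟨Q, hQ, hadd⟩ := exists_Kf_add_le hN₀ hN₁
  refine ⟨3 * Q + 2, by finiteness, fun f t B p P ht hB₀ hB hp hP hf => ?_⟩
  have hKt : Kf N₀ N₁ t f < 2 * B := by
    have hKB : Kf N₀ N₁ t f ≤ B := by simpa [ht.ne'] using hf.1 t ht le_rfl
    rw [two_mul]
    exact hKB.trans_lt (ENNReal.lt_add_right hB hB₀)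
  obtain ⟨g, hg⟩ := iInf_lt_iff.1 hKt
  have hg₀ : N₀ g ≤ 2 * B := le_self_add.trans hg.le
  have hg₁ : ENNReal.ofReal t * N₁ (f - g) ≤ 2 * B := le_add_self.trans hg.le
  exact ⟨g, .of_near_left hN₀ hN₁ hadd hp hf hg₀ hg₁,
    .of_near_right hN₀ hN₁ hadd ht hP hf hg₀ hg₁⟩

end decomposition

/-! ### The endpoint norms -/

/-- The functional of `k = K(·, f)` that defines the norm of the paper's `𝓡`-space: `v` is the
weight `u ^ (-σ) a(u)` of the inner norm and `b` the quotient of the two slowly varying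
parameters. -/
def nestedTailNorm (r q : ℝ≥0∞) (b v : ℝ → ℝ) (k : ℝ → ℝ≥0∞) : ℝ≥0∞ :=
  haarNorm r (Ioi 0) fun s =>
    ENNReal.ofReal (b s) * haarNorm q (Ioi s) fun u => ENNReal.ofReal (v u) * k u

lemma mulHaar_singleton (t : ℝ) : mulHaar {t} = 0 := by
  rw [mulHaar, Measure.map_apply Real.measurable_exp (measurableSet_singleton t)]
  exact ((Set.subsingleton_singleton.preimage Real.exp_injective).finite).measure_zero _

lemma haarNorm_Ioi_le_add {q : ℝ≥0∞} (hq : 0 < q) (s t : ℝ) (F : ℝ → ℝ≥0∞) :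
    haarNorm q (Ioi s) F ≤
      2 ^ q⁻¹.toReal * (haarNorm q (Ioo s t) F + haarNorm q (Ioi t) F) := by
  have hsub : Ioi s ≤ᵐ[mulHaar] (Ioo s t ∪ Ioi t : Set ℝ) := by
    filter_upwards [compl_mem_ae_iff.2 (mulHaar_singleton t)] with u hu hsu
    exact (lt_or_gt_of_ne hu).imp (fun h => ⟨hsu, h⟩) id
  exact (eLpNorm_mono_measure F (Measure.restrict_mono' hsub le_rfl)).trans
    (haarNorm_union_le hq _ _ F)

section lower

variable {k : ℝ → ℝ≥0∞} {t : ℝ}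

lemma tailNorm_mul_le {r : ℝ≥0∞} (b : ℝ → ℝ) (hk : Monotone k) (ht : 0 ≤ t) :
    tailNorm r b t * k t ≤ haarNorm r (Ioi 0) fun u => ENNReal.ofReal (b u) * k u :=
  calc tailNorm r b t * k t
      ≤ haarNorm r (Ioi t) fun u => k t * ENNReal.ofReal (b u) := by
        rw [mul_comm]
        exact mul_haarNorm_le measurableSet_Ioi
    _ ≤ haarNorm r (Ioi t) fun u => ENNReal.ofReal (b u) * k u :=
        haarNorm_mono measurableSet_Ioi fun u hu => by
          rw [mul_comm]
          gcongr
          exact hk (le_of_lt hu)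
    _ ≤ _ := haarNorm_mono_set (Ioi_subset_Ioi ht)

lemma headNorm_mul_le_nestedTailNorm {r q : ℝ≥0∞} (b v : ℝ → ℝ) (t : ℝ) :
    headNorm r b t * haarNorm q (Ioi t) (fun u => ENNReal.ofReal (v u) * k u) ≤
      nestedTailNorm r q b v k := by
  rw [mul_comm]
  calc _ ≤ haarNorm r (Ioo 0 t) fun s => haarNorm q (Ioi t)
        (fun u => ENNReal.ofReal (v u) * k u) * ENNReal.ofReal (b s) :=
        mul_haarNorm_le measurableSet_Ioo
    _ ≤ haarNorm r (Ioo 0 t) fun s => ENNReal.ofReal (b s) *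
        haarNorm q (Ioi s) fun u => ENNReal.ofReal (v u) * k u :=
        haarNorm_mono measurableSet_Ioo fun s hs => by
          rw [mul_comm]
          gcongr
          exact haarNorm_mono_set (Ioi_subset_Ioi hs.2.le)
    _ ≤ _ := haarNorm_mono_set Ioo_subset_Ioi_self

lemma HasPowerGrowth.exists_headNorm_mul_le {v : ℝ → ℝ} {α β : ℝ} (hv : HasPowerGrowth v α β)
    {q : ℝ≥0∞} (hq : 0 < q) (C m : ℝ) :
    ∃ D : ℝ≥0∞, D ≠ ∞ ∧ ∀ (r : ℝ≥0∞) (b : ℝ → ℝ) (k : ℝ → ℝ≥0∞), HasModerateGrowth C m k →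
      ∀ t > 0, headNorm r b t * ENNReal.ofReal (v t) * k t ≤ D * nestedTailNorm r q b v k := by
  obtain ⟨C', hC', n, hvC⟩ := hv.exists_exists_hasModerateGrowth
  obtain ⟨D, hD, h⟩ := exists_le_mul_haarNorm hq (C' * C) (n + m)
  refine ⟨D, hD, fun r b k hk t ht => ?_⟩
  calc headNorm r b t * ENNReal.ofReal (v t) * k t
      = headNorm r b t * (ENNReal.ofReal (v t) * k t) := mul_assoc _ _ _
    _ ≤ headNorm r b t * (D * haarNorm q (Ioi t) fun u => ENNReal.ofReal (v u) * k u) := by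
        refine mul_le_mul_right ((h _ (hvC.mul hk hC'.le) t ht).trans ?_) _
        gcongr
        exact haarNorm_mono_set Ioo_subset_Ioi_self
    _ = D * (headNorm r b t * haarNorm q (Ioi t) fun u => ENNReal.ofReal (v u) * k u) := by ring
    _ ≤ _ := by gcongr; exact headNorm_mul_le_nestedTailNorm b v t

end lower

section upper

variable {b v : ℝ → ℝ} {α β p P : ℝ} {r q : ℝ≥0∞}

lemma HasSubpowerGrowth.exists_haarNorm_le_mul_tailNorm (hb : HasSubpowerGrowth b) (hr : 0 < r)
    (hp : 0 < p) :
    ∃ D : ℝ≥0∞, D ≠ ∞ ∧ ∀ (k : ℝ → ℝ≥0∞) (t : ℝ) (B : ℝ≥0∞), 0 < t → B ≠ ∞ →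
      PowerBound k t B p 0 →
        haarNorm r (Ioi 0) (fun u => ENNReal.ofReal (b u) * k u) ≤ D * (tailNorm r b t * B) := by
  obtain ⟨C, hC, hhead⟩ := (hb (p / 2) (by positivity)).exists_haarNorm_Ioo_le hr
    (p := p) (by linarith)
  obtain ⟨L, hL, hbL⟩ := hb.exists_le_mul_tailNorm hr
  refine ⟨2 ^ r⁻¹.toReal * (C * L + 1), by finiteness, fun k t B ht hB hk => ?_⟩
  have htail : haarNorm r (Ioi t) (fun u => ENNReal.ofReal (b u) * k u) ≤ B * tailNorm r b t :=
    haarNorm_le_mul measurableSet_Ioi hB fun u hu => by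
      rw [mul_comm]
      gcongr
      simpa using hk.2 u (le_of_lt hu)
  calc _ ≤ _ := haarNorm_Ioi_le_add hr 0 t _
    _ ≤ 2 ^ r⁻¹.toReal * (C * B * (L * tailNorm r b t) + B * tailNorm r b t) := by
        gcongr
        refine (hhead t B k ht hB hk.1).trans ?_
        gcongr
        exact hbL t ht
    _ = _ := by ring

lemma PowerBound.of_le_right {k : ℝ → ℝ≥0∞} {t s : ℝ} {B : ℝ≥0∞} (h : PowerBound k t B p P)
    (ht : 0 < t) (hts : t ≤ s) :
    ∀ u, s ≤ u → k u ≤ B * ENNReal.ofReal ((s / t) ^ P) * ENNReal.ofReal ((u / s) ^ P) := by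
  intro u hsu
  have hs : 0 < s := ht.trans_le hts
  have hu : 0 < u := hs.trans_le hsu
  rw [mul_assoc, ← ENNReal.ofReal_mul (by positivity), ← Real.mul_rpow (by positivity)
    (by positivity), div_mul_div_cancel₀' hs.ne' t u]
  exact h.2 u (hts.trans hsu)

lemma HasPowerGrowth.exists_haarNorm_Ioi_le_of_powerBound (hv : HasPowerGrowth v α β)
    (hq : 0 < q) (hp : 0 < α + p) (hP : β + P < 0) :
    ∃ D : ℝ≥0∞, D ≠ ∞ ∧ ∀ (k : ℝ → ℝ≥0∞) (t : ℝ) (B : ℝ≥0∞), 0 < t → B ≠ ∞ →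
      PowerBound k t B p P →
        (∀ s, 0 ≤ s → haarNorm q (Ioi s) (fun u => ENNReal.ofReal (v u) * k u) ≤
          D * B * ENNReal.ofReal (v t)) ∧
        ∀ s, t ≤ s → haarNorm q (Ioi s) (fun u => ENNReal.ofReal (v u) * k u) ≤
          D * B * ENNReal.ofReal ((s / t) ^ P) * ENNReal.ofReal (v s) := by
  obtain ⟨C, hC, hhead⟩ := hv.exists_haarNorm_Ioo_le hq hp
  obtain ⟨C', hC', htail⟩ := hv.exists_haarNorm_Ioi_le hq hP
  refine ⟨2 ^ q⁻¹.toReal * (C + C') + C', by finiteness, fun k t B ht hB hk =>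
    ⟨fun s hs => ?_, fun s hts => ?_⟩⟩
  · calc _ ≤ _ := haarNorm_mono_set (Ioi_subset_Ioi hs)
      _ ≤ _ := haarNorm_Ioi_le_add hq 0 t _
      _ ≤ 2 ^ q⁻¹.toReal * (C * B * ENNReal.ofReal (v t) + C' * B * ENNReal.ofReal (v t)) := by
          gcongr
          · exact hhead t B k ht hB hk.1
          · exact htail t B k ht hB hk.2
      _ = 2 ^ q⁻¹.toReal * (C + C') * B * ENNReal.ofReal (v t) := by ring
      _ ≤ _ := by gcongr; exact le_self_add
  · calc _ ≤ C' * (B * ENNReal.ofReal ((s / t) ^ P)) * ENNReal.ofReal (v s) :=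
          htail s _ k (ht.trans_le hts) (by finiteness) (hk.of_le_right ht hts)
      _ = C' * B * ENNReal.ofReal ((s / t) ^ P) * ENNReal.ofReal (v s) := by ring
      _ ≤ _ := by gcongr; exact le_add_self

lemma HasSubpowerGrowth.exists_nestedTailNorm_le (hb : HasSubpowerGrowth b)
    (hv : HasPowerGrowth v α β) (hr : 0 < r) (hq : 0 < q) (hp : 0 < α + p) (hP : β + P < 0) :
    ∃ D : ℝ≥0∞, D ≠ ∞ ∧ ∀ (k : ℝ → ℝ≥0∞) (t : ℝ) (B : ℝ≥0∞), 0 < t → B ≠ ∞ →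
      PowerBound k t B p P →
        nestedTailNorm r q b v k ≤ D * (headNorm r b t * ENNReal.ofReal (v t) * B) := by
  obtain ⟨C, hC, hinner⟩ := hv.exists_haarNorm_Ioi_le_of_powerBound hq hp hP
  obtain ⟨C', hC', htail⟩ := ((hb (-(β + P) / 2) (by linarith)).mul hv).exists_haarNorm_Ioi_le hr
    (p := P) (by linarith)
  obtain ⟨L, hL, hbL⟩ := hb.exists_le_mul_headNorm hr
  refine ⟨2 ^ r⁻¹.toReal * (C + C' * C * L), by finiteness, fun k t B ht hB hk => ?_⟩
  obtain ⟨hinner₀, hinner₁⟩ := hinner k t B ht hB hk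
  set J := fun s => haarNorm q (Ioi s) fun u => ENNReal.ofReal (v u) * k u
  have hle : haarNorm r (Ioo 0 t) (fun s => ENNReal.ofReal (b s) * J s) ≤
      C * B * ENNReal.ofReal (v t) * headNorm r b t :=
    haarNorm_le_mul measurableSet_Ioo (by finiteness) fun s hs => by
      rw [mul_comm]
      gcongr
      exact hinner₀ s hs.1.le
  have hge : haarNorm r (Ioi t) (fun s => ENNReal.ofReal (b s) * J s) ≤
      C' * (C * B) * (L * headNorm r b t * ENNReal.ofReal (v t)) := by
    calc _ ≤ haarNorm r (Ioi t) fun s =>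
          ENNReal.ofReal (b s * v s) * (C * B * ENNReal.ofReal ((s / t) ^ P)) :=
          haarNorm_mono measurableSet_Ioi fun s (hs : t < s) => by
            rw [ENNReal.ofReal_mul (hb.pos (ht.trans hs)).le, mul_assoc,
              mul_comm (ENNReal.ofReal (v s))]
            gcongr
            exact hinner₁ s hs.le
      _ ≤ C' * (C * B) * ENNReal.ofReal (b t * v t) :=
          htail t _ _ ht (by finiteness) fun _ _ => le_rfl
      _ ≤ _ := by
          rw [ENNReal.ofReal_mul (hb.pos ht).le]
          gcongr
          exact hbL t ht
  calc nestedTailNorm r q b v k ≤ _ := haarNorm_Ioi_le_add hr 0 t _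
    _ ≤ 2 ^ r⁻¹.toReal * (C * B * ENNReal.ofReal (v t) * headNorm r b t +
        C' * (C * B) * (L * headNorm r b t * ENNReal.ofReal (v t))) := by gcongr
    _ = _ := by ring

end upper

/-! ### Reiteration -/

lemma ennreal_le_mul_of_forall_gt {C x y : ℝ≥0∞} (hC₀ : C ≠ 0) (hC : C ≠ ∞)
    (h : ∀ z, y < z → z ≠ ∞ → x ≤ C * z) : x ≤ C * y := by
  rw [← ENNReal.inv_mul_le_iff hC₀ hC]
  refine le_of_forall_gt_imp_ge_of_dense fun z hz => ?_
  rcases eq_or_ne z ∞ with rfl | hz'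
  · exact le_top
  · exact (ENNReal.inv_mul_le_iff hC₀ hC).2 (h z hz hz')

lemma le_mul_ofReal_mul_of_le {x y z C d : ℝ} {k M B : ℝ≥0∞} (hx : 0 < x) (hC : 0 ≤ C)
    (hd : 0 ≤ d) (hxy : x ≤ C * (d * y)) (hk : ENNReal.ofReal y * k ≤ ENNReal.ofReal z * M)
    (hB : ENNReal.ofReal C * M ≤ ENNReal.ofReal x * B) : k ≤ B * ENNReal.ofReal (d * z) := by
  refine (ENNReal.mul_le_mul_iff_right (a := ENNReal.ofReal x) (by simpa)
    ENNReal.ofReal_ne_top).1 ?_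
  calc ENNReal.ofReal x * k ≤ ENNReal.ofReal (C * (d * y)) * k := by gcongr
    _ = ENNReal.ofReal C * ENNReal.ofReal d * (ENNReal.ofReal y * k) := by
        rw [ENNReal.ofReal_mul hC, ENNReal.ofReal_mul hd]
        ring
    _ ≤ ENNReal.ofReal C * ENNReal.ofReal d * (ENNReal.ofReal z * M) := by gcongr
    _ = ENNReal.ofReal C * M * ENNReal.ofReal (d * z) := by
        rw [ENNReal.ofReal_mul hd]
        ring
    _ ≤ ENNReal.ofReal x * B * ENNReal.ofReal (d * z) := by gcongr
    _ = _ := mul_assoc _ _ _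

lemma HasPowerGrowth.exists_powerBound {W : ℝ → ℝ} {α β : ℝ} (hW : HasPowerGrowth W α β) :
    ∃ C : ℝ≥0∞, C ≠ ∞ ∧ ∀ (ε t : ℝ) (k : ℝ → ℝ≥0∞) (B : ℝ≥0∞), 0 < t →
      C * powerMax ε (fun u => ENNReal.ofReal (W u) * k u) t ≤ ENNReal.ofReal (W t) * B →
        PowerBound k t B (-β - ε) (-α + ε) := by
  obtain ⟨hpos, C, hC, hgrowth⟩ := hW
  refine ⟨ENNReal.ofReal C, ENNReal.ofReal_ne_top, fun ε t k B ht hB =>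
    ⟨fun u hu hut => ?_, fun u htu => ?_⟩⟩
  · have hsplit : (u / t) ^ (-β - ε) = (t / u) ^ β * (t / u) ^ ε := by
      rw [← Real.rpow_add (by positivity), ← inv_div, Real.inv_rpow (by positivity),
        ← Real.rpow_neg (by positivity)]
      congr 1
      ring
    have hWt : W t ≤ C * ((t / u) ^ β * W u) := by
      rw [← mul_assoc]
      exact (hgrowth u t hu hut).1
    rw [hsplit]
    exact le_mul_ofReal_mul_of_le (hpos t ht) hC.le (by positivity) hWt
      (le_rpow_mul_powerMax_of_le (F := fun u => ENNReal.ofReal (W u) * k u) hu hut) hB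
  · have hu : 0 < u := ht.trans_le htu
    have hWt : W t ≤ C * ((u / t) ^ (-α) * W u) := by
      rw [Real.rpow_neg (by positivity), mul_left_comm, ← div_eq_inv_mul,
        le_div_iff₀ (by positivity), mul_comm]
      exact (hgrowth t u ht htu).2
    rw [Real.rpow_add (by positivity)]
    exact le_mul_ofReal_mul_of_le (hpos t ht) hC.le (by positivity) hWt
      (le_rpow_mul_powerMax_of_ge (F := fun u => ENNReal.ofReal (W u) * k u) ht htu) hB

lemma HasPowerGrowth.exists_haarNorm_equiv_of_le_powerMax {ρ : ℝ → ℝ} {α β ε : ℝ}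
    (hρ : HasPowerGrowth ρ α β) (hα : 0 < α) (hβ : 0 ≤ β) {q : ℝ≥0∞} (hq : 0 < q) (hε : 0 < ε)
    {A B : ℝ} (m n : ℝ) (hB : 0 ≤ B) {C : ℝ≥0∞} (hC : C ≠ ∞) :
    ∃ D : ℝ≥0∞, D ≠ ∞ ∧ ∀ F H : ℝ → ℝ≥0∞, HasModerateGrowth A m F → HasModerateGrowth B n H →
      (∀ t > 0, F t ≤ C * H (ρ t)) → (∀ t > 0, H (ρ t) ≤ C * powerMax ε F t) →
        haarNorm q (Ioi 0) F ≤ D * haarNorm q (Ioi 0) H ∧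
          haarNorm q (Ioi 0) H ≤ D * haarNorm q (Ioi 0) F := by
  obtain ⟨D₁, hD₁, hchange⟩ := hρ.exists_haarNorm_comp_equiv hα hβ q hB n
  obtain ⟨D₂, hD₂, hmax⟩ := HasModerateGrowth.exists_haarNorm_powerMax_le hq A m hε
  refine ⟨D₁ * C * (1 + D₂), by finiteness, fun F H hF hH hlow hup => ⟨?_, ?_⟩⟩
  · calc haarNorm q (Ioi 0) F ≤ C * haarNorm q (Ioi 0) fun t => H (ρ t) :=
          haarNorm_le_mul measurableSet_Ioi hC hlow
      _ ≤ C * (D₁ * haarNorm q (Ioi 0) H) := by gcongr; exact (hchange H hH).1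
      _ = D₁ * C * 1 * haarNorm q (Ioi 0) H := by ring
      _ ≤ _ := by gcongr; exact le_self_add
  · calc haarNorm q (Ioi 0) H ≤ D₁ * haarNorm q (Ioi 0) fun t => H (ρ t) := (hchange H hH).2
      _ ≤ D₁ * (C * haarNorm q (Ioi 0) (powerMax ε F)) := by
          gcongr
          exact haarNorm_le_mul measurableSet_Ioi hC hup
      _ ≤ D₁ * (C * (D₂ * haarNorm q (Ioi 0) F)) := by gcongr; exact hmax F hF
      _ = D₁ * C * D₂ * haarNorm q (Ioi 0) F := by ring
      _ ≤ _ := by gcongr; exact le_add_self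

lemma equivNorms_of_le_mul {G : Type*} {X Y : G → ℝ≥0∞} {D : ℝ≥0∞} (hD : D ≠ ∞)
    (h : ∀ f, Y f ≤ D * X f ∧ X f ≤ D * Y f) : EquivNorms X Y := by
  refine ⟨D + 1, by simp, by finiteness, fun f => ⟨?_, (h f).2.trans ?_⟩⟩
  · rw [ENNReal.inv_mul_le_iff (by simp) (by finiteness)]
    exact (h f).1.trans (by gcongr; exact le_self_add)
  · gcongr
    exact le_self_add

variable {G : Type*} [AddCommGroup G]

/-- The norm of `u ↦ w(u) K(u, f)` in `L_q(du/u)`; it is `normK` with the power absorbed into the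
weight. -/
def weightedKNorm (N₀ N₁ : G → ℝ≥0∞) (q : ℝ≥0∞) (w : ℝ → ℝ) (f : G) : ℝ≥0∞ :=
  haarNorm q (Ioi 0) fun u => ENNReal.ofReal (w u) * Kf N₀ N₁ u f

/-- The norm of the `𝓡`-space in terms of `du/u`; it is `normR` with the power absorbed into the
weight `v`. -/
def nestedKNorm (N₀ N₁ : G → ℝ≥0∞) (r q : ℝ≥0∞) (b v : ℝ → ℝ) (f : G) : ℝ≥0∞ :=
  nestedTailNorm r q b v fun u => Kf N₀ N₁ u f

section endpoints

variable {N₀ N₁ : G → ℝ≥0∞} {b₀ b v ρ : ℝ → ℝ} {γ δ : ℝ} {r₀ r q : ℝ≥0∞}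

lemma exists_tailNorm_mul_Kf_le (hN₀ : IsAddGroupQuasiSeminorm N₀)
    (hN₁ : IsAddGroupQuasiSeminorm N₁) (hv : HasPowerGrowth v γ δ) (hq : 0 < q)
    (hρ : ∀ t > 0,
      ENNReal.ofReal (ρ t) * (headNorm r b t * ENNReal.ofReal (v t)) = tailNorm r₀ b₀ t) :
    ∃ C : ℝ≥0∞, C ≠ ∞ ∧ ∀ f : G, ∀ t > 0, tailNorm r₀ b₀ t * Kf N₀ N₁ t f ≤
      C * Kf (weightedKNorm N₀ N₁ r₀ b₀) (nestedKNorm N₀ N₁ r q b v) (ρ t) f := by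
  obtain ⟨Q, hQ, hsum⟩ := exists_mul_Kf_le_mul_Kf hN₀ hN₁
  obtain ⟨D, hD, hhead⟩ := hv.exists_headNorm_mul_le hq 1 1
  refine ⟨Q * (1 + D), by finiteness, fun f t ht =>
    hsum _ _ _ _ _ _ (by finiteness) (fun g => ?_) (fun g => ?_) f⟩
  · exact (tailNorm_mul_le b₀ (Kf_mono N₀ N₁ g) ht.le).trans
      (le_mul_of_one_le_left zero_le le_self_add)
  · calc tailNorm r₀ b₀ t * Kf N₀ N₁ t g
        = ENNReal.ofReal (ρ t) * (headNorm r b t * ENNReal.ofReal (v t) * Kf N₀ N₁ t g) := by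
          rw [← hρ t ht]
          ring
      _ ≤ ENNReal.ofReal (ρ t) * (D * nestedKNorm N₀ N₁ r q b v g) := by
          gcongr ENNReal.ofReal (ρ t) * ?_
          exact hhead r b _ (Kf_hasModerateGrowth N₀ N₁ g) t ht
      _ = D * (ENNReal.ofReal (ρ t) * nestedKNorm N₀ N₁ r q b v g) := by ring
      _ ≤ _ := by gcongr; exact le_add_self

lemma exists_Kf_le_of_powerBound (hN₀ : IsAddGroupQuasiSeminorm N₀)
    (hN₁ : IsAddGroupQuasiSeminorm N₁) (hb₀ : HasSubpowerGrowth b₀) (hb : HasSubpowerGrowth b)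
    (hv : HasPowerGrowth v γ δ) (hr₀ : 0 < r₀) (hr : 0 < r) (hq : 0 < q) {p P : ℝ} (hp : 0 < p)
    (hp' : p ≤ 1) (hP : 0 ≤ P) (hγ : -1 < γ) (hδ : δ + P < 0)
    (hρ : ∀ t > 0,
      ENNReal.ofReal (ρ t) * (headNorm r b t * ENNReal.ofReal (v t)) = tailNorm r₀ b₀ t) :
    ∃ C : ℝ≥0∞, C ≠ ∞ ∧ ∀ (f : G) (t : ℝ) (B : ℝ≥0∞), 0 < t → B ≠ 0 → B ≠ ∞ →
      PowerBound (fun u => Kf N₀ N₁ u f) t B p P →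
        Kf (weightedKNorm N₀ N₁ r₀ b₀) (nestedKNorm N₀ N₁ r q b v) (ρ t) f ≤
          C * (tailNorm r₀ b₀ t * B) := by
  obtain ⟨D, hD, hsplit⟩ := exists_forall_exists_powerBound hN₀ hN₁
  obtain ⟨D₀, hD₀, hleft⟩ := hb₀.exists_haarNorm_le_mul_tailNorm hr₀ hp
  obtain ⟨D₁, hD₁, hright⟩ := hb.exists_nestedTailNorm_le hv hr hq (p := 1) (by linarith) hδ
  refine ⟨(D₀ + D₁) * D, by finiteness, fun f t B ht hB₀ hB hf => ?_⟩
  obtain ⟨g, hg, hfg⟩ := hsplit f t B p P ht hB₀ hB hp' hP hf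
  calc Kf (weightedKNorm N₀ N₁ r₀ b₀) (nestedKNorm N₀ N₁ r q b v) (ρ t) f
      ≤ weightedKNorm N₀ N₁ r₀ b₀ g +
          ENNReal.ofReal (ρ t) * nestedKNorm N₀ N₁ r q b v (f - g) := iInf_le _ g
    _ ≤ D₀ * (tailNorm r₀ b₀ t * (D * B)) + ENNReal.ofReal (ρ t) *
          (D₁ * (headNorm r b t * ENNReal.ofReal (v t) * (D * B))) := by
        gcongr
        · exact hleft _ t _ ht (by finiteness) hg
        · exact hright _ t _ ht (by finiteness) hfg
    _ = D₀ * (tailNorm r₀ b₀ t * (D * B)) + D₁ *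
          (ENNReal.ofReal (ρ t) * (headNorm r b t * ENNReal.ofReal (v t)) * (D * B)) := by ring
    _ = (D₀ + D₁) * D * (tailNorm r₀ b₀ t * B) := by
        rw [hρ t ht]
        ring

variable {w : ℝ → ℝ} {η : ℝ}

lemma exists_mul_Kf_le_powerMax {W : ℝ → ℝ} {ε : ℝ} (hN₀ : IsAddGroupQuasiSeminorm N₀)
    (hN₁ : IsAddGroupQuasiSeminorm N₁) (hb₀ : HasSubpowerGrowth b₀) (hb : HasSubpowerGrowth b)
    (hv : HasPowerGrowth v γ δ) (hW : HasPowerGrowth W (-η - ε) (-η + ε)) (hr₀ : 0 < r₀)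
    (hr : 0 < r) (hq : 0 < q) (hε : 0 < ε) (hη : 2 * ε < η) (hη' : η ≤ 1) (hγ : -1 < γ)
    (hδ : η + 2 * ε < -δ)
    (hρ : ∀ t > 0,
      ENNReal.ofReal (ρ t) * (headNorm r b t * ENNReal.ofReal (v t)) = tailNorm r₀ b₀ t)
    (hwW : ∀ t > 0, ENNReal.ofReal (w (ρ t)) * tailNorm r₀ b₀ t = ENNReal.ofReal (W t)) :
    ∃ C : ℝ≥0∞, C ≠ ∞ ∧ ∀ f : G, ∀ t > 0, ENNReal.ofReal (w (ρ t)) *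
        Kf (weightedKNorm N₀ N₁ r₀ b₀) (nestedKNorm N₀ N₁ r q b v) (ρ t) f ≤
      C * powerMax ε (fun u => ENNReal.ofReal (W u) * Kf N₀ N₁ u f) t := by
  obtain ⟨C₁, hC₁, hbound⟩ := hW.exists_powerBound
  obtain ⟨C₂, hC₂, hK⟩ := exists_Kf_le_of_powerBound (p := -(-η + ε) - ε) (P := -(-η - ε) + ε)
    hN₀ hN₁ hb₀ hb hv hr₀ hr hq (by linarith) (by linarith) (by linarith) hγ (by linarith) hρ
  refine ⟨C₂ * (C₁ + 1) + 1, by finiteness, fun f t ht =>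
    ennreal_le_mul_of_forall_gt (by simp) (by finiteness) fun M hM hM' => ?_⟩
  have hWt : ENNReal.ofReal (W t) ≠ 0 := by simpa using hW.pos ht
  have hWB : ENNReal.ofReal (W t) * ((C₁ + 1) * M / ENNReal.ofReal (W t)) = (C₁ + 1) * M :=
    ENNReal.mul_div_cancel hWt ENNReal.ofReal_ne_top
  have hf := hbound ε t (fun u => Kf N₀ N₁ u f) ((C₁ + 1) * M / ENNReal.ofReal (W t)) ht
    (by rw [hWB]; exact mul_le_mul' le_self_add hM.le)
  have hB₀ : (C₁ + 1) * M / ENNReal.ofReal (W t) ≠ 0 :=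
    ENNReal.div_ne_zero.2 ⟨mul_ne_zero (by simp) (pos_of_gt hM).ne', ENNReal.ofReal_ne_top⟩
  calc _ ≤ ENNReal.ofReal (w (ρ t)) *
        (C₂ * (tailNorm r₀ b₀ t * ((C₁ + 1) * M / ENNReal.ofReal (W t)))) := by
        gcongr
        exact hK f t _ ht hB₀ (ENNReal.div_ne_top (by finiteness) hWt) hf
    _ = C₂ * (ENNReal.ofReal (w (ρ t)) * tailNorm r₀ b₀ t *
          ((C₁ + 1) * M / ENNReal.ofReal (W t))) := by ring
    _ = C₂ * (C₁ + 1) * M := by rw [hwW t ht, hWB, mul_assoc]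
    _ ≤ _ := by gcongr; exact le_self_add

theorem equivNorms_weightedKNorm {a₁ c : ℝ → ℝ} {σ α β κ μ : ℝ} {r₂ : ℝ≥0∞}
    (hN₀ : IsAddGroupQuasiSeminorm N₀) (hN₁ : IsAddGroupQuasiSeminorm N₁)
    (hb₀ : HasSubpowerGrowth b₀) (hb : HasSubpowerGrowth b) (ha₁ : HasSubpowerGrowth a₁)
    (hc : HasSubpowerGrowth c) (hw : HasPowerGrowth w κ μ) (hρg : HasPowerGrowth ρ α β)
    (hα : 0 < α) (hβ : 0 ≤ β) (hr₀ : 0 < r₀) (hr : 0 < r) (hq : 0 < q) (hr₂ : 0 < r₂)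
    (hη : 0 < η) (hησ : η < σ) (hσ : σ < 1)
    (hρ : ∀ t > 0, ENNReal.ofReal (ρ t) * (headNorm r b t * ENNReal.ofReal (t ^ (-σ) * a₁ t)) =
      tailNorm r₀ b₀ t)
    (hwc : ∀ t > 0, ENNReal.ofReal (w (ρ t)) * tailNorm r₀ b₀ t =
      ENNReal.ofReal (t ^ (-η) * c t)) :
    EquivNorms
      (weightedKNorm (weightedKNorm N₀ N₁ r₀ b₀)
        (nestedKNorm N₀ N₁ r q b fun u => u ^ (-σ) * a₁ u) r₂ w)
      (weightedKNorm N₀ N₁ r₂ fun u => u ^ (-η) * c u) := by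
  obtain ⟨ε, hε, hεη, hεσ⟩ : ∃ ε > 0, 2 * ε < η ∧ η + 3 * ε < σ := by
    have : 0 < min η (σ - η) := lt_min hη (sub_pos.2 hησ)
    refine ⟨min η (σ - η) / 4, by positivity, ?_, ?_⟩
    · linarith [min_le_left η (σ - η)]
    · linarith [min_le_right η (σ - η)]
  have hv : HasPowerGrowth (fun t => t ^ (-σ) * a₁ t) (-(1 + σ) / 2) (-σ + ε) :=
    ha₁.rpow_mul _ (by linarith) (by linarith)
  have hW : HasPowerGrowth (fun t => t ^ (-η) * c t) (-η - ε) (-η + ε) :=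
    hc.rpow_mul _ (by linarith) (by linarith)
  obtain ⟨C₁, hC₁, hlow⟩ := exists_tailNorm_mul_Kf_le hN₀ hN₁ hv hq hρ
  obtain ⟨C₂, hC₂, hup⟩ := exists_mul_Kf_le_powerMax hN₀ hN₁ hb₀ hb hv hW hr₀ hr hq hε hεη
    (by linarith) (by linarith) (by linarith) hρ hwc
  obtain ⟨A, hA, m, hWm⟩ := HasPowerGrowth.exists_exists_hasModerateGrowth hW
  obtain ⟨B, hB, n, hwn⟩ := hw.exists_exists_hasModerateGrowth
  obtain ⟨D, hD, hequiv⟩ := hρg.exists_haarNorm_equiv_of_le_powerMax hα hβ hr₂ hε (A := A * 1)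
    (B := B * 1) (m + 1) (n + 1) (by positivity) (C := C₁ + C₂) (by finiteness)
  refine equivNorms_of_le_mul hD fun f => hequiv _ _ (hWm.mul (Kf_hasModerateGrowth N₀ N₁ f) hA.le)
    (hwn.mul (Kf_hasModerateGrowth _ _ f) hB.le) (fun t ht => ?_) fun t ht => ?_
  · rw [← hwc t ht, mul_assoc]
    refine (mul_le_mul' le_rfl (hlow f t ht)).trans ?_
    rw [mul_left_comm]
    exact mul_le_mul' le_self_add le_rfl
  · exact (hup f t ht).trans (mul_le_mul' le_add_self le_rfl)

end endpoints

lemma ofReal_rpow_sub_mul {u : ℝ} (hu : 0 < u) (p s c : ℝ) :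
    ENNReal.ofReal (u ^ (p - s) * c) = ENNReal.ofReal (u ^ (-s)) * ENNReal.ofReal (u ^ p * c) := by
  rw [← ENNReal.ofReal_mul (by positivity), ← mul_assoc, ← Real.rpow_add hu, neg_add_eq_sub]

lemma LqNorm_svWgt {r : ℝ≥0∞} (hr : 0 < r) {S : Set ℝ} (hS : MeasurableSet S) (hS₀ : S ⊆ Ioi 0)
    (b : ℝ → ℝ) : LqNorm r S (svWgt r b) = haarNorm r S fun u => ENNReal.ofReal (b u) :=
  LqNorm_eq_haarNorm hr hS hS₀ fun _ hu =>
    ENNReal.ofReal_mul (Real.rpow_nonneg (mem_Ioi.1 (hS₀ hu)).le _)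

lemma LqNorm_rpow_sub_mul {q : ℝ≥0∞} (hq : 0 < q) {S : Set ℝ} (hS : MeasurableSet S)
    (hS₀ : S ⊆ Ioi 0) (p : ℝ) (b : ℝ → ℝ) (k : ℝ → ℝ≥0∞) :
    LqNorm q S (fun u => ENNReal.ofReal (u ^ (p - q⁻¹.toReal) * b u) * k u) =
      haarNorm q S fun u => ENNReal.ofReal (u ^ p * b u) * k u :=
  LqNorm_eq_haarNorm hq hS hS₀ fun _ hu => by rw [ofReal_rpow_sub_mul (hS₀ hu), mul_assoc]

lemma normK_eq_weightedKNorm (N₀ N₁ : G → ℝ≥0∞) (θ : ℝ) {q : ℝ≥0∞} (hq : 0 < q) (b : ℝ → ℝ) :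
    normK N₀ N₁ θ q b = weightedKNorm N₀ N₁ q fun u => u ^ (-θ) * b u := by
  ext f
  exact LqNorm_rpow_sub_mul hq measurableSet_Ioi le_rfl _ _ _

lemma normR_eq_nestedKNorm (N₀ N₁ : G → ℝ≥0∞) (σ : ℝ) {r q : ℝ≥0∞} (hr : 0 < r) (hq : 0 < q)
    (b a : ℝ → ℝ) :
    normR N₀ N₁ σ r q b a =
      nestedKNorm N₀ N₁ r q (fun t => b t / a t) fun u => u ^ (-σ) * a u := by
  ext f
  refine LqNorm_eq_haarNorm hr measurableSet_Ioi le_rfl fun t (ht : 0 < t) => ?_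
  rw [ENNReal.ofReal_mul (by positivity), mul_assoc,
    LqNorm_rpow_sub_mul hq measurableSet_Ioi (Ioi_subset_Ioi ht.le)]

lemma rpow_neg_mul_eq {θ σ t x y : ℝ} (ht : 0 < t) (hx : 0 < x) (hy : 0 < y) :
    (t ^ σ * (x / y)) ^ (-θ) * x = t ^ (-(θ * σ)) * (x ^ (1 - θ) * y ^ θ) := by
  rw [Real.mul_rpow (by positivity) (by positivity), ← Real.rpow_mul ht.le, mul_neg, mul_comm σ,
    Real.div_rpow hx.le hy.le, Real.rpow_neg hy.le, Real.rpow_neg hx.le, Real.rpow_sub hx,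
    Real.rpow_one]
  field_simp

lemma HasSubpowerGrowth.toReal_LqNorm_Ioi {b c : ℝ → ℝ} {r : ℝ≥0∞} (hb : HasSubpowerGrowth b)
    (hr : 0 < r) (hfin : LqNorm r (Ioi 1) (svWgt r b) ≠ ∞)
    (hc : ∀ t, c t = (LqNorm r (Ioi t) (svWgt r b)).toReal) :
    HasSubpowerGrowth c ∧ ∀ t > 0, ENNReal.ofReal (c t) = tailNorm r b t := by
  have htail : ∀ t > 0, LqNorm r (Ioi t) (svWgt r b) = tailNorm r b t := fun t ht =>
    LqNorm_svWgt hr measurableSet_Ioi (Ioi_subset_Ioi ht.le) b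
  rw [htail 1 one_pos] at hfin
  refine ⟨(hb.toReal_tailNorm hr hfin).congr fun t ht => by rw [hc, htail t ht], fun t ht => ?_⟩
  rw [hc, htail t ht, ENNReal.ofReal_toReal (hb.tailNorm_ne_top hfin ht)]

lemma HasSubpowerGrowth.mul_toReal_LqNorm_Ioo {a b c : ℝ → ℝ} {r : ℝ≥0∞}
    (ha : HasSubpowerGrowth a) (hb : HasSubpowerGrowth b) (hr : 0 < r)
    (hfin : LqNorm r (Ioo 0 1) (svWgt r b) ≠ ∞)
    (hc : ∀ t, c t = a t * (LqNorm r (Ioo 0 t) (svWgt r b)).toReal) :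
    HasSubpowerGrowth c ∧
      ∀ t > 0, ENNReal.ofReal (c t) = ENNReal.ofReal (a t) * headNorm r b t := by
  have hhead : ∀ t, LqNorm r (Ioo 0 t) (svWgt r b) = headNorm r b t := fun t =>
    LqNorm_svWgt hr measurableSet_Ioo Ioo_subset_Ioi_self b
  rw [hhead] at hfin
  refine ⟨(ha.mul (hb.toReal_headNorm hr hfin)).congr fun t _ => by rw [hc, hhead],
    fun t ht => ?_⟩
  rw [hc, hhead, ENNReal.ofReal_mul (ha.pos ht).le,
    ENNReal.ofReal_toReal (hb.headNorm_ne_top hfin ht)]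

theorem theorem20_general {N₀ N₁ : G → ℝ≥0∞}
    (hN₀ : IsAddGroupQuasiSeminorm N₀) (hN₁ : IsAddGroupQuasiSeminorm N₁)
    {θ θ₁ : ℝ} (hθ : 0 < θ) (hθ' : θ < 1) (hθ₁ : 0 < θ₁) (hθ₁' : θ₁ < 1)
    {q₁ r₀ r₁ r : ℝ≥0∞} (hq₁ : 0 < q₁) (hr₀ : 0 < r₀) (hr₁ : 0 < r₁) (hr : 0 < r)
    {a a₁ b₀ b₁ : ℝ → ℝ} (ha : HasSubpowerGrowth a) (ha₁ : HasSubpowerGrowth a₁)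
    (hb₀ : HasSubpowerGrowth b₀) (hb₁ : HasSubpowerGrowth b₁)
    (hfin₁ : LqNorm r₁ (Ioo 0 1) (svWgt r₁ fun s => b₁ s / a₁ s) ≠ ∞)
    (hfin₀ : LqNorm r₀ (Ioi 1) (svWgt r₀ b₀) ≠ ∞)
    {c₀ c₁ ρ : ℝ → ℝ}
    (hc₀ : ∀ t, c₀ t = (LqNorm r₀ (Ioi t) (svWgt r₀ b₀)).toReal)
    (hc₁ : ∀ t, c₁ t = a₁ t * (LqNorm r₁ (Ioo 0 t) (svWgt r₁ fun s => b₁ s / a₁ s)).toReal)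
    (hρ : ∀ t, ρ t = t ^ θ₁ * (c₀ t / c₁ t)) :
    EquivNorms
      (normK (normK N₀ N₁ 0 r₀ b₀) (normR N₀ N₁ θ₁ r₁ q₁ b₁ a₁) θ r a)
      (normK N₀ N₁ (θ * θ₁) r fun t => c₀ t ^ (1 - θ) * c₁ t ^ θ * a (ρ t)) := by
  have hb := hb₁.div ha₁
  obtain ⟨hc₀', htail⟩ := hb₀.toReal_LqNorm_Ioi hr₀ hfin₀ hc₀
  obtain ⟨hc₁', hhead⟩ := ha₁.mul_toReal_LqNorm_Ioo hb hr₁ hfin₁ hc₁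
  have hρ' : HasPowerGrowth ρ (θ₁ / 2) (θ₁ + 1) :=
    ((hc₀'.div hc₁').rpow_mul θ₁ (by linarith) (by linarith)).congr fun t _ => hρ t
  have hc : HasSubpowerGrowth fun t => c₀ t ^ (1 - θ) * c₁ t ^ θ * a (ρ t) :=
    ((hc₀'.rpow (sub_pos.2 hθ')).mul (hc₁'.rpow hθ)).mul
      (ha.comp hρ' (by positivity) (by positivity))
  have hw : HasPowerGrowth (fun u => u ^ (-θ) * a u) (-θ - 1) (-θ + 1) :=
    ha.rpow_mul _ (by linarith) (by linarith)
  simp only [normK_eq_weightedKNorm _ _ _ hr, normK_eq_weightedKNorm _ _ _ hr₀,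
    normR_eq_nestedKNorm _ _ _ hr₁ hq₁, neg_zero, Real.rpow_zero, one_mul]
  refine equivNorms_weightedKNorm hN₀ hN₁ hb₀ hb ha₁ hc hw hρ' (by positivity) (by positivity)
    hr₀ hr₁ hq₁ hr (by positivity) (mul_lt_of_lt_one_left hθ₁ hθ') hθ₁' (fun t ht => ?_)
    fun t ht => ?_
  · have hc₁t := hc₁'.pos ht
    have hρc₁ : ρ t * t ^ (-θ₁) * c₁ t = c₀ t := by
      rw [hρ, Real.rpow_neg ht.le]
      field_simp
    rw [← htail t ht, ← hρc₁, ENNReal.ofReal_mul' hc₁t.le, hhead t ht,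
      ENNReal.ofReal_mul (hρ'.pos ht).le, ENNReal.ofReal_mul (by positivity)]
    ring
  · rw [← htail t ht, ← ENNReal.ofReal_mul' (hc₀'.pos ht).le, mul_right_comm]
    nth_rw 1 [hρ t]
    rw [rpow_neg_mul_eq ht (hc₀'.pos ht) (hc₁'.pos ht), mul_assoc]

theorem theorem20
    (A₀ A₁ : QuasiBanach E)
    (hne : ∃ x : E, x ≠ 0 ∧ A₀.N x ≠ ∞ ∧ A₁.N x ≠ ∞)
    (θ θ₁ : ℝ) (hθ : 0 < θ) (hθ' : θ < 1) (hθ₁ : 0 < θ₁) (hθ₁' : θ₁ < 1)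
    (q₁ r₀ r₁ r : ℝ≥0∞) (hq₁ : 0 < q₁) (hr₀ : 0 < r₀) (hr₁ : 0 < r₁) (hr : 0 < r)
    (a a₁ b₀ b₁ : ℝ → ℝ)
    (h_sv_a : SlowlyVarying a)
    (h_sv_a₁ : SlowlyVarying a₁)
    (h_sv_b₀ : SlowlyVarying b₀)
    (h_sv_b₁ : SlowlyVarying b₁)
    (hfin₁ : LqNorm r₁ (Ioo 0 1) (svWgt r₁ (fun s => b₁ s / a₁ s)) ≠ ∞)
    (hfin₀ : LqNorm r₀ (Ioi 1) (svWgt r₀ (fun s => b₀ s)) ≠ ∞)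
    (c₀ c₁ ρ : ℝ → ℝ)
    (hc₀ : ∀ t, c₀ t = (LqNorm r₀ (Ioi t) (svWgt r₀ (fun s => b₀ s))).toReal)
    (hc₁ : ∀ t, c₁ t = a₁ t * (LqNorm r₁ (Ioo 0 t) (svWgt r₁ (fun s => b₁ s / a₁ s))).toReal)
    (hρ : ∀ t, ρ t = t ^ θ₁ * (c₀ t / c₁ t)) :
    EquivNorms
      (normK (normK A₀.N A₁.N 0 r₀ b₀) (normR A₀.N A₁.N θ₁ r₁ q₁ b₁ a₁) θ r a)
      (normK A₀.N A₁.N (θ * θ₁) r (fun t => c₀ t ^ (1 - θ) * c₁ t ^ θ * a (ρ t))) := by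
  exact theorem20_general A₀.isAddGroupQuasiSeminorm A₁.isAddGroupQuasiSeminorm hθ hθ' hθ₁ hθ₁' hq₁
    hr₀ hr₁ hr h_sv_a.hasSubpowerGrowth h_sv_a₁.hasSubpowerGrowth h_sv_b₀.hasSubpowerGrowth
    h_sv_b₁.hasSubpowerGrowth hfin₁ hfin₀ hc₀ hc₁ hρ

end
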